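/- arXiv:1309.0302 — 4 statements merged into one kernel-verified Lean document; each statement's English description precedes it below -/
import Mathlib

section
/- Let M be a real positive semidefinite matrix partitioned in block form M = [[A, B],[Bᵀ, C]], where A and C are square diagonal blocks. Then ‖M‖ ≤ ‖A‖ + ‖C‖, where ‖·‖ is the spectral norm. -/
open Matrix

noncomputable def specNorm {m n : Type*} [Fintype m] [Fintype n] [DecidableEq n]
    (A : Matrix m n ℝ) : ℝ :=
  ‖LinearMap.toContinuousLinearMap (Matrix.toEuclideanLin A)‖

/-
Write the matrix as `Xᴴ * X` and split the columns of `X` as `X = [Y Z]`. The diagonal blocks are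
`Yᴴ * Y` and `Zᴴ * Z`, while `X * Xᴴ = Y * Yᴴ + Z * Zᴴ`; swapping the factors of a Gram matrix
preserves the spectral norm, so the bound is the triangle inequality for this sum.
-/

section Star

variable {R l m n : Type*} [Semiring R] [Star R]

theorem fromCols_mul_conjTranspose_self [Fintype m] [Fintype n]
    (Y : Matrix l m R) (Z : Matrix l n R) :
    fromCols Y Z * (fromCols Y Z)ᴴ = Y * Yᴴ + Z * Zᴴ := by
  rw [conjTranspose_fromCols_eq_fromRows_conjTranspose, fromCols_mul_fromRows]

theorem conjTranspose_fromCols_mul_self [Fintype l] (Y : Matrix l m R) (Z : Matrix l n R) :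
    (fromCols Y Z)ᴴ * fromCols Y Z = fromBlocks (Yᴴ * Y) (Yᴴ * Z) (Zᴴ * Y) (Zᴴ * Z) := by
  rw [conjTranspose_fromCols_eq_fromRows_conjTranspose, fromRows_mul_fromCols]

end Star

open scoped ComplexOrder MatrixOrder Matrix.Norms.L2Operator in
theorem exists_eq_conjTranspose_mul_self_of_posSemidef {𝕜 n : Type*} [RCLike 𝕜] [Fintype n]
    {M : Matrix n n 𝕜} (hM : M.PosSemidef) : ∃ X : Matrix n n 𝕜, M = Xᴴ * X := by
  classical exact CStarAlgebra.nonneg_iff_eq_star_mul_self.mp hM.nonneg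

section L2OpNorm

open scoped Matrix.Norms.L2Operator

variable {𝕜 l m n : Type*} [RCLike 𝕜] [Fintype l] [Fintype m] [Fintype n]

theorem l2_opNorm_mul_conjTranspose_self [DecidableEq m] [DecidableEq n] (A : Matrix m n 𝕜) :
    ‖A * Aᴴ‖ = ‖A‖ * ‖A‖ := by
  simpa only [conjTranspose_conjTranspose, l2_opNorm_conjTranspose] using
    l2_opNorm_conjTranspose_mul_self Aᴴ

theorem l2_opNorm_fromCols_mul_self_le [DecidableEq m] [DecidableEq n]
    (Y : Matrix l m 𝕜) (Z : Matrix l n 𝕜) :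
    ‖fromCols Y Z‖ * ‖fromCols Y Z‖ ≤ ‖Y‖ * ‖Y‖ + ‖Z‖ * ‖Z‖ := by
  classical
  calc ‖fromCols Y Z‖ * ‖fromCols Y Z‖
      = ‖Y * Yᴴ + Z * Zᴴ‖ := by
        rw [← l2_opNorm_mul_conjTranspose_self, fromCols_mul_conjTranspose_self]
    _ ≤ ‖Y * Yᴴ‖ + ‖Z * Zᴴ‖ := norm_add_le _ _
    _ = ‖Y‖ * ‖Y‖ + ‖Z‖ * ‖Z‖ := by simp only [l2_opNorm_mul_conjTranspose_self]

open scoped ComplexOrder in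
theorem posSemidef_block_norm_le_general [DecidableEq m] [DecidableEq n]
    (A : Matrix m m 𝕜) (B : Matrix m n 𝕜) (C : Matrix n n 𝕜)
    (hM : (fromBlocks A B Bᴴ C).PosSemidef) : ‖fromBlocks A B Bᴴ C‖ ≤ ‖A‖ + ‖C‖ := by
  obtain ⟨X, hX⟩ := exists_eq_conjTranspose_mul_self_of_posSemidef hM
  obtain ⟨Y, Z, rfl⟩ : ∃ Y Z, X = fromCols Y Z := ⟨X.toCols₁, X.toCols₂, (fromCols_toCols X).symm⟩
  obtain ⟨hA, -, -, hC⟩ := fromBlocks_inj.mp (hX.trans (conjTranspose_fromCols_mul_self Y Z))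
  rw [hX, hA, hC]
  simpa only [l2_opNorm_conjTranspose_mul_self] using l2_opNorm_fromCols_mul_self_le Y Z

theorem specNorm_eq_l2_opNorm [DecidableEq n] (A : Matrix m n ℝ) : specNorm A = ‖A‖ :=
  rfl

end L2OpNorm

/-- for a positive semidefinite block matrix `[[A,B],[Bᵀ,C]]`,
the spectral norm is at most `‖A‖ + ‖C‖`. -/
theorem posSemidef_block_norm_le {a b : ℕ}
    (A : Matrix (Fin a) (Fin a) ℝ) (B : Matrix (Fin a) (Fin b) ℝ)
    (C : Matrix (Fin b) (Fin b) ℝ)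
    (hM : (Matrix.fromBlocks A B Bᵀ C).PosSemidef) :
    specNorm (Matrix.fromBlocks A B Bᵀ C) ≤ specNorm A + specNorm C := by
  simpa only [specNorm_eq_l2_opNorm, conjTranspose_eq_transpose_of_trivial] using
    posSemidef_block_norm_le_general A B C hM
end

section
/- Fix real matrices S (of size m×k) and T (of size n×l), and let G be a k×l standard Gaussian random matrix. Then E‖S G Tᵀ‖ ≤ ‖S‖·‖T‖_F + ‖S‖_F·‖T‖, where ‖·‖ is the spectral norm and ‖·‖_F is the Frobenius norm. -/
open Matrix MeasureTheory ProbabilityTheory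

noncomputable def frobNorm {m n : Type*} [Fintype m] [Fintype n] (A : Matrix m n ℝ) : ℝ :=
  Real.sqrt (∑ i, ∑ j, (A i j) ^ 2)

instance matrixMeasurableSpace {m n : Type*} : MeasurableSpace (Matrix m n ℝ) :=
  MeasurableSpace.pi

/-- The distribution of a standard Gaussian random matrix: i.i.d. `N(0,1)` entries. -/
noncomputable def stdGaussianMatrix (m n : Type*) [Fintype m] [Fintype n] :
    Measure (Matrix m n ℝ) :=
  Measure.pi fun _ : m => Measure.pi fun _ : n => gaussianReal 0 1

/-!
Let `c θ i = (sin θ • a i, cos θ • b i)`, a path of finite families of vectors in a Hilbert sum with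
standard Gaussian vector `g`. By Gaussian integration by parts the derivative of
`E log ∑ᵢ exp ⟪c θ i, g⟫` is a nonnegative combination of `‖a i - a k‖² - ‖b i - b k‖²`, so a family
with smaller distances has a smaller expected smooth maximum; rescaling turns the smooth maximum
into the maximum (Sudakov–Fernique).

Up to a factor `1 - ε`, the norm of `S G Tᵀ` is a maximum of `⟪a ⊗ b, G⟫` over finitely many pairs
`a = Sᵀ u`, `b = Tᵀ v` with `u`, `v` in the unit balls. Distances between the tensors `a ⊗ b` are at
most those between the vectors `(‖b‖ • a, ‖a‖ • b)`, because the difference of their squares is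
`(‖a‖ ‖b‖ - ‖a'‖ ‖b'‖)² + 2 (‖a‖ ‖a'‖ - ⟪a, a'⟫) (‖b‖ ‖b'‖ - ⟪b, b'⟫) ≥ 0`. The maximum over the
latter family is at most `‖T‖ ‖S g‖ + ‖S‖ ‖T g'‖`, and `E ‖S g‖ ≤ (E ‖S g‖²)^½ = ‖S‖_F`.
-/

open scoped RealInnerProductSpace

section Stein

theorem hasDerivAt_gaussianPDFReal (μ : ℝ) (v : NNReal) (x : ℝ) :
    HasDerivAt (gaussianPDFReal μ v) (-((x - μ) / v * gaussianPDFReal μ v x)) x := by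
  have hexponent : HasDerivAt (fun x : ℝ ↦ -(x - μ) ^ 2 / (2 * v)) (-((x - μ) / v)) x := by
    refine ((((hasDerivAt_id x).sub_const μ).pow 2).neg.div_const (2 * (v : ℝ))).congr_deriv ?_
    simp only [id_eq, Nat.cast_ofNat]
    ring
  rw [gaussianPDFReal_def]
  exact (hexponent.exp.const_mul _).congr_deriv (by ring)

theorem integrable_gaussianReal_iff {μ : ℝ} {v : NNReal} (hv : v ≠ 0) {f : ℝ → ℝ} :
    Integrable f (gaussianReal μ v) ↔ Integrable fun x ↦ f x * gaussianPDFReal μ v x := by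
  rw [gaussianReal_of_var_ne_zero _ hv,
    integrable_withDensity_iff (measurable_gaussianPDF μ v) (by simp [gaussianPDF])]
  simp [gaussianPDF, ENNReal.toReal_ofReal, gaussianPDFReal_nonneg]

theorem integral_sub_mul_gaussianReal {μ : ℝ} {v : NNReal} {f f' : ℝ → ℝ}
    (hf : ∀ x, HasDerivAt f (f' x) x)
    (hxf_int : Integrable (fun x ↦ (x - μ) * f x) (gaussianReal μ v))
    (hf_int : Integrable f (gaussianReal μ v)) (hf'_int : Integrable f' (gaussianReal μ v)) :
    ∫ x, (x - μ) * f x ∂gaussianReal μ v = v * ∫ x, f' x ∂gaussianReal μ v := by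
  rcases eq_or_ne v 0 with rfl | hv
  · simp
  have hv' : (v : ℝ) ≠ 0 := by exact_mod_cast hv
  rw [integrable_gaussianReal_iff hv] at hxf_int hf_int hf'_int
  have by_parts := integral_mul_deriv_eq_deriv_mul_of_integrable (u := f) (u' := f')
    (fun x _ ↦ hf x) (fun x _ ↦ hasDerivAt_gaussianPDFReal μ v x)
    ((hxf_int.const_mul (-(v : ℝ)⁻¹)).congr (.of_forall fun x ↦ by simp; ring)) hf'_int hf_int
  calc ∫ x, (x - μ) * f x ∂gaussianReal μ v
      = -v * ∫ x, f x * -((x - μ) / v * gaussianPDFReal μ v x) := by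
        rw [integral_gaussianReal_eq_integral_smul hv, ← integral_const_mul]
        congr with x
        simp only [smul_eq_mul]
        field_simp
    _ = v * ∫ x, f' x ∂gaussianReal μ v := by
        rw [by_parts, integral_gaussianReal_eq_integral_smul hv, neg_mul_neg]
        simp only [smul_eq_mul, mul_comm]

variable {E F : Type*} [NormedAddCommGroup E] [InnerProductSpace ℝ E] [FiniteDimensional ℝ E]
  [MeasurableSpace E] [BorelSpace E] [NormedAddCommGroup F] [InnerProductSpace ℝ F]
  [FiniteDimensional ℝ F] [MeasurableSpace F] [BorelSpace F]

theorem stdGaussian_map_of_inner_eq {L : E →L[ℝ] F} {J : F → E} (hJ : ∀ y, ‖J y‖ = ‖y‖)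
    (hLJ : ∀ x y, ⟪L x, y⟫ = ⟪x, J y⟫) : (stdGaussian E).map L = stdGaussian F := by
  have : CompleteSpace F := FiniteDimensional.complete ℝ F
  have := Measure.isProbabilityMeasure_map (μ := stdGaussian E) L.continuous.aemeasurable
  refine Measure.ext_of_charFun (funext fun y ↦ ?_)
  rw [charFun_apply, integral_map L.continuous.aemeasurable (by fun_prop)]
  simp_rw [hLJ]
  rw [← charFun_apply, charFun_stdGaussian, charFun_stdGaussian, hJ]

theorem stdGaussian_map_fst :
    (stdGaussian (WithLp 2 (E × F))).map WithLp.fst = stdGaussian E :=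
  stdGaussian_map_of_inner_eq (L := WithLp.fstL 2 ℝ E F) (J := fun x ↦ WithLp.toLp 2 (x, 0))
    (by simp) (by simp [WithLp.prod_inner_apply])

theorem stdGaussian_map_snd :
    (stdGaussian (WithLp 2 (E × F))).map WithLp.snd = stdGaussian F :=
  stdGaussian_map_of_inner_eq (L := WithLp.sndL 2 ℝ E F) (J := fun y ↦ WithLp.toLp 2 (0, y))
    (by simp) (by simp [WithLp.prod_inner_apply])

theorem measurePreserving_resample {v : E} (hv : ‖v‖ = 1) :
    MeasurePreserving (fun p : E × ℝ ↦ p.1 + (p.2 - ⟪v, p.1⟫) • v)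
      ((stdGaussian E).prod (gaussianReal 0 1)) (stdGaussian E) := by
  have : CompleteSpace E := FiniteDimensional.complete ℝ E
  have hmeas : Measurable fun p : E × ℝ ↦ p.1 + (p.2 - ⟪v, p.1⟫) • v :=
    Continuous.measurable (by fun_prop)
  have := Measure.isProbabilityMeasure_map
    (μ := (stdGaussian E).prod (gaussianReal 0 1)) hmeas.aemeasurable
  refine ⟨hmeas, Measure.ext_of_charFun (funext fun y ↦ ?_)⟩
  have inner_split (p : E × ℝ) : ⟪p.1 + (p.2 - ⟪v, p.1⟫) • v, y⟫ =
      ⟪p.1, y - ⟪v, y⟫ • v⟫ + ⟪v, y⟫ * p.2 := by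
    simp only [inner_add_left, inner_sub_right, real_inner_smul_left, real_inner_smul_right,
      real_inner_comm v p.1]
    ring
  have norm_split : ‖y - ⟪v, y⟫ • v‖ ^ 2 + ⟪v, y⟫ ^ 2 = ‖y‖ ^ 2 := by
    rw [norm_sub_sq_real, real_inner_smul_right, norm_smul, hv, real_inner_comm, mul_one,
      Real.norm_eq_abs, sq_abs]
    ring
  rw [charFun_apply, integral_map hmeas.aemeasurable (by fun_prop)]
  simp_rw [inner_split, Complex.ofReal_add, Complex.ofReal_mul, add_mul, Complex.exp_add]
  rw [integral_prod_mul (fun x : E ↦ Complex.exp (⟪x, y - ⟪v, y⟫ • v⟫ * Complex.I))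
      (fun s : ℝ ↦ Complex.exp (⟪v, y⟫ * s * Complex.I)),
    ← charFun_apply, ← charFun_apply_real, charFun_stdGaussian, charFun_gaussianReal,
    charFun_stdGaussian, ← Complex.exp_add, ← Complex.ofReal_pow ‖y‖, ← norm_split]
  push_cast
  ring_nf

theorem integral_inner_mul_stdGaussian_of_norm_eq_one {f f' : E → ℝ} {v : E}
    (hv : ‖v‖ = 1) (hf : ∀ x, HasLineDerivAt ℝ f (f' x) x v)
    (hxf_int : Integrable (fun x ↦ ⟪v, x⟫ * f x) (stdGaussian E))
    (hf_int : Integrable f (stdGaussian E)) (hf'_int : Integrable f' (stdGaussian E)) :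
    ∫ x, ⟪v, x⟫ * f x ∂stdGaussian E = ∫ x, f' x ∂stdGaussian E := by
  have resample := measurePreserving_resample hv
  have integrable_comp {g : E → ℝ} (hg : Integrable g (stdGaussian E)) :=
    resample.integrable_comp_of_integrable hg
  have integral_eq {g : E → ℝ} (hg : Integrable g (stdGaussian E)) :
      ∫ x, g x ∂stdGaussian E =
        ∫ x, ∫ s, g (x + (s - ⟪v, x⟫) • v) ∂gaussianReal 0 1 ∂stdGaussian E := by
    rw [← integral_prod (fun p : E × ℝ ↦ g (p.1 + (p.2 - ⟪v, p.1⟫) • v)) (integrable_comp hg),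
      ← integral_map resample.aemeasurable (by rw [resample.map_eq]; exact hg.1), resample.map_eq]
  have inner_resample (x : E) (s : ℝ) : ⟪v, x + (s - ⟪v, x⟫) • v⟫ = s := by
    simp [inner_add_right, real_inner_smul_right, hv]
  have hderiv (x : E) (s : ℝ) : HasDerivAt (fun s ↦ f (x + (s - ⟪v, x⟫) • v))
      (f' (x + (s - ⟪v, x⟫) • v)) s := by
    have hline : HasDerivAt (fun t ↦ f (x + (s - ⟪v, x⟫) • v + t • v))
      (f' (x + (s - ⟪v, x⟫) • v)) (s - s) := by rw [sub_self]; exact hf _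
    refine (hline.comp_sub_const s s).congr_of_eventuallyEq (.of_forall fun r ↦ ?_)
    simp only [add_assoc, ← add_smul]
    congr 3
    ring
  rw [integral_eq hxf_int, integral_eq hf'_int]
  refine integral_congr_ae ?_
  filter_upwards [(integrable_comp hxf_int).prod_right_ae, (integrable_comp hf_int).prod_right_ae,
    (integrable_comp hf'_int).prod_right_ae] with x hx_xf hx_f hx_f'
  simp only [Function.comp_apply, inner_resample] at hx_xf ⊢
  simpa using integral_sub_mul_gaussianReal (hderiv x) (by simpa using hx_xf) hx_f hx_f'

theorem integral_inner_mul_stdGaussian {f f' : E → ℝ} {v : E}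
    (hf : ∀ x, HasLineDerivAt ℝ f (f' x) x v)
    (hxf_int : Integrable (fun x ↦ ⟪v, x⟫ * f x) (stdGaussian E))
    (hf_int : Integrable f (stdGaussian E)) (hf'_int : Integrable f' (stdGaussian E)) :
    ∫ x, ⟪v, x⟫ * f x ∂stdGaussian E = ∫ x, f' x ∂stdGaussian E := by
  rcases eq_or_ne v 0 with rfl | hv
  · simp [fun x ↦ (hf x).unique hasLineDerivAt_zero]
  have hunit := integral_inner_mul_stdGaussian_of_norm_eq_one (v := ‖v‖⁻¹ • v)
    (norm_smul_inv_norm hv) (fun x ↦ (hf x).smul ‖v‖⁻¹)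
    (by simpa [real_inner_smul_left, mul_assoc] using hxf_int.const_mul ‖v‖⁻¹)
    hf_int (hf'_int.const_mul _)
  simpa [real_inner_smul_left, mul_assoc, integral_const_mul, hv] using hunit

end Stein

section Softmax

variable {I : Type*} [Fintype I]

/-- The smooth maximum `log ∑ᵢ exp xᵢ`, which exceeds `maxᵢ xᵢ` by at most `log |I|`. -/
noncomputable def logSumExp (x : I → ℝ) : ℝ := Real.log (∑ i, Real.exp (x i))

/-- The Gibbs weights `exp xᵢ / ∑ₖ exp xₖ`, which form the gradient of `logSumExp`. -/
noncomputable def softmax (x : I → ℝ) (i : I) : ℝ := Real.exp (x i) / ∑ k, Real.exp (x k)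

theorem softmax_nonneg (x : I → ℝ) (i : I) : 0 ≤ softmax x i := by
  unfold softmax
  positivity

variable [Nonempty I]

theorem sum_exp_pos (x : I → ℝ) : 0 < ∑ i, Real.exp (x i) :=
  Finset.sum_pos (fun _ _ ↦ Real.exp_pos _) Finset.univ_nonempty

theorem sum_softmax (x : I → ℝ) : ∑ i, softmax x i = 1 := by
  simp only [softmax, ← Finset.sum_div, div_self (sum_exp_pos x).ne']

theorem softmax_le_one (x : I → ℝ) (i : I) : softmax x i ≤ 1 :=
  sum_softmax x ▸ Finset.single_le_sum (fun k _ ↦ softmax_nonneg x k) (Finset.mem_univ i)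

theorem softmax_eq_exp_sub_logSumExp (x : I → ℝ) (i : I) :
    softmax x i = Real.exp (x i - logSumExp x) := by
  rw [softmax, logSumExp, Real.exp_sub, Real.exp_log (sum_exp_pos x)]

theorem le_logSumExp (x : I → ℝ) (i : I) : x i ≤ logSumExp x :=
  (Real.le_log_iff_exp_le (sum_exp_pos x)).2 <|
    Finset.single_le_sum (f := fun i ↦ Real.exp (x i)) (fun _ _ ↦ (Real.exp_pos _).le)
      (Finset.mem_univ i)

theorem iSup_le_logSumExp (x : I → ℝ) : ⨆ i, x i ≤ logSumExp x :=
  ciSup_le (le_logSumExp x)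

theorem logSumExp_le_iSup_add_log_card (x : I → ℝ) :
    logSumExp x ≤ (⨆ i, x i) + Real.log (Fintype.card I) := by
  have hcard : (Fintype.card I : ℝ) ≠ 0 := by exact_mod_cast Fintype.card_ne_zero
  calc logSumExp x ≤ Real.log (∑ _i : I, Real.exp (⨆ k, x k)) :=
        Real.log_le_log (sum_exp_pos x) <| Finset.sum_le_sum fun i _ ↦
          Real.exp_le_exp.2 (le_ciSup (Set.finite_range x).bddAbove i)
    _ = (⨆ i, x i) + Real.log (Fintype.card I) := by
        rw [Finset.sum_const, Finset.card_univ, nsmul_eq_mul,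
          Real.log_mul hcard (Real.exp_ne_zero _), Real.log_exp, add_comm]

theorem continuous_logSumExp : Continuous (logSumExp : (I → ℝ) → ℝ) := by
  unfold logSumExp
  exact Continuous.log (by fun_prop) fun x ↦ (sum_exp_pos x).ne'

theorem continuous_softmax : Continuous (softmax : (I → ℝ) → I → ℝ) :=
  continuous_pi fun i ↦ by
    simp only [softmax_eq_exp_sub_logSumExp]
    exact ((continuous_apply i).sub continuous_logSumExp).rexp

theorem hasDerivAt_logSumExp {x : ℝ → I → ℝ} {x' : I → ℝ} {t : ℝ}
    (hx : ∀ i, HasDerivAt (x · i) (x' i) t) :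
    HasDerivAt (fun s ↦ logSumExp (x s)) (∑ i, softmax (x t) i * x' i) t := by
  refine ((HasDerivAt.fun_sum fun i _ ↦ (hx i).exp).log (sum_exp_pos (x t)).ne').congr_deriv ?_
  rw [Finset.sum_div]
  exact Finset.sum_congr rfl fun i _ ↦ by rw [softmax, div_mul_eq_mul_div]

theorem hasDerivAt_softmax {x : ℝ → I → ℝ} {x' : I → ℝ} {t : ℝ}
    (hx : ∀ i, HasDerivAt (x · i) (x' i) t) (i : I) :
    HasDerivAt (fun s ↦ softmax (x s) i)
      (softmax (x t) i * (x' i - ∑ k, softmax (x t) k * x' k)) t := by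
  simpa only [softmax_eq_exp_sub_logSumExp] using ((hx i).fun_sub (hasDerivAt_logSumExp hx)).exp

end Softmax

section Rotation

variable {E F : Type*} [NormedAddCommGroup E] [InnerProductSpace ℝ E] [NormedAddCommGroup F]
  [InnerProductSpace ℝ F]

/-- The path `θ ↦ (sin θ • x, cos θ • y)` in the Hilbert sum, which interpolates between `y` at
`θ = 0` and `x` at `θ = π / 2`; its velocity is the path itself a quarter turn later. -/
noncomputable def rotationPath (x : E) (y : F) (θ : ℝ) : WithLp 2 (E × F) :=
  WithLp.toLp 2 (Real.sin θ • x, Real.cos θ • y)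

theorem hasDerivAt_rotationPath (x : E) (y : F) (θ : ℝ) :
    HasDerivAt (rotationPath x y) (rotationPath x y (θ + Real.pi / 2)) θ := by
  rw [rotationPath, Real.sin_add_pi_div_two, Real.cos_add_pi_div_two]
  exact (WithLp.prodContinuousLinearEquiv 2 ℝ E F).symm.hasFDerivAt.comp_hasDerivAt θ
    (((Real.hasDerivAt_sin θ).smul_const x).prodMk ((Real.hasDerivAt_cos θ).smul_const y))

theorem norm_rotationPath_le (x : E) (y : F) (θ : ℝ) : ‖rotationPath x y θ‖ ≤ ‖x‖ + ‖y‖ := by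
  refine (sq_le_sq₀ (norm_nonneg _) (by positivity)).1 ?_
  simp only [rotationPath, WithLp.prod_norm_sq_eq_of_L2, WithLp.toLp_fst, WithLp.toLp_snd,
    norm_smul, mul_pow, Real.norm_eq_abs, sq_abs]
  calc Real.sin θ ^ 2 * ‖x‖ ^ 2 + Real.cos θ ^ 2 * ‖y‖ ^ 2
      ≤ 1 * ‖x‖ ^ 2 + 1 * ‖y‖ ^ 2 := by
        gcongr
        exacts [Real.sin_sq_le_one θ, Real.cos_sq_le_one θ]
    _ ≤ (‖x‖ + ‖y‖) ^ 2 := by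
        rw [add_sq]
        linarith [mul_nonneg (norm_nonneg x) (norm_nonneg y)]

theorem rotationPath_sub (x x' : E) (y y' : F) (θ : ℝ) :
    rotationPath x y θ - rotationPath x' y' θ = rotationPath (x - x') (y - y') θ := by
  simp only [rotationPath, ← WithLp.toLp_sub, Prod.mk_sub_mk, smul_sub]

theorem inner_rotationPath_add_pi_div_two (x : E) (y : F) (θ : ℝ) :
    ⟪rotationPath x y (θ + Real.pi / 2), rotationPath x y θ⟫ =
      Real.sin θ * Real.cos θ * (‖x‖ ^ 2 - ‖y‖ ^ 2) := by
  simp only [rotationPath, Real.sin_add_pi_div_two, Real.cos_add_pi_div_two,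
    WithLp.prod_inner_apply, real_inner_smul_left, real_inner_smul_right,
    real_inner_self_eq_norm_sq]
  ring

end Rotation

section Comparison

theorem integrable_iSup_of_finite {α ι : Type*} [Finite ι] {m : MeasurableSpace α} {μ : Measure α}
    {f : ι → α → ℝ} (hf : ∀ i, Integrable (f i) μ) : Integrable (fun x ↦ ⨆ i, f i x) μ := by
  cases nonempty_fintype ι
  refine (integrable_finsetSum Finset.univ fun i _ ↦ (hf i).norm).mono'
    (AEMeasurable.iSup fun i ↦ (hf i).aemeasurable).aestronglyMeasurable (.of_forall fun x ↦ ?_)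
  rcases isEmpty_or_nonempty ι with _ | _
  · simp
  obtain ⟨i, hi⟩ := exists_eq_ciSup_of_finite (f := fun i ↦ f i x)
  rw [← hi]
  exact Finset.single_le_sum (f := fun i ↦ ‖f i x‖) (fun _ _ ↦ norm_nonneg _) (Finset.mem_univ i)

variable {I E F : Type*} [NormedAddCommGroup E] [InnerProductSpace ℝ E]

theorem sum_mul_sum_inner_sub [Fintype I] (p : I → ℝ) (c d : I → E) :
    2 * ∑ i, p i * ∑ k, p k * ⟪d i, c i - c k⟫ =
      ∑ i, ∑ k, p i * p k * ⟪d i - d k, c i - c k⟫ := by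
  have hswap : ∑ i, ∑ k, p i * p k * ⟪d i, c i - c k⟫ =
      ∑ i, ∑ k, p i * p k * -⟪d k, c i - c k⟫ := by
    rw [Finset.sum_comm]
    simp only [← inner_neg_right, neg_sub, mul_comm (p _) (p _)]
  have hexpand : ∑ i, p i * ∑ k, p k * ⟪d i, c i - c k⟫ =
      ∑ i, ∑ k, p i * p k * ⟪d i, c i - c k⟫ := by simp only [Finset.mul_sum, mul_assoc]
  rw [hexpand, two_mul]
  nth_rw 2 [hswap]
  simp only [← Finset.sum_add_distrib, ← mul_add, ← sub_eq_add_neg, ← inner_sub_left]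

theorem continuous_logSumExp_inner [Fintype I] [Nonempty I] (c : I → E) :
    Continuous fun x ↦ logSumExp fun i ↦ ⟪c i, x⟫ :=
  continuous_logSumExp.comp (by fun_prop : Continuous fun x i ↦ ⟪c i, x⟫)

variable [FiniteDimensional ℝ E] [MeasurableSpace E] [BorelSpace E] [NormedAddCommGroup F]
  [InnerProductSpace ℝ F] [FiniteDimensional ℝ F] [MeasurableSpace F] [BorelSpace F]

theorem integrable_inner_stdGaussian (v : E) : Integrable (fun x ↦ ⟪v, x⟫) (stdGaussian E) :=
  IsGaussian.integrable_id.const_inner v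

section Finite

variable [Fintype I] [Nonempty I]

theorem integrable_softmax_mul (c : I → E) (i : I) {f : E → ℝ}
    (hf : Integrable f (stdGaussian E)) :
    Integrable (fun x ↦ softmax (fun k ↦ ⟪c k, x⟫) i * f x) (stdGaussian E) := by
  have hcont : Continuous fun x ↦ softmax (fun k ↦ ⟪c k, x⟫) i :=
    (continuous_apply i).comp <|
      continuous_softmax.comp (by fun_prop : Continuous fun x k ↦ ⟪c k, x⟫)
  refine hf.bdd_mul (c := 1) hcont.aestronglyMeasurable (.of_forall fun x ↦ ?_)
  rw [Real.norm_of_nonneg (softmax_nonneg _ i)]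
  exact softmax_le_one _ i

theorem integrable_softmax (c : I → E) (i : I) :
    Integrable (fun x ↦ softmax (fun k ↦ ⟪c k, x⟫) i) (stdGaussian E) := by
  simpa using integrable_softmax_mul c i (integrable_const 1)

theorem integral_softmax_mul_inner (c : I → E) (i : I) (v : E) :
    ∫ x, softmax (fun k ↦ ⟪c k, x⟫) i * ⟪v, x⟫ ∂stdGaussian E =
      ∫ x, softmax (fun k ↦ ⟪c k, x⟫) i *
        ∑ k, softmax (fun k ↦ ⟪c k, x⟫) k * ⟪v, c i - c k⟫ ∂stdGaussian E := by
  simp only [mul_comm _ ⟪v, _⟫]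
  refine integral_inner_mul_stdGaussian (fun x ↦ ?_)
    (by simpa only [mul_comm] using integrable_softmax_mul c i (integrable_inner_stdGaussian v))
    (integrable_softmax c i) (integrable_softmax_mul c i (integrable_finsetSum _ fun k _ ↦
      (integrable_softmax c k).const_mul _))
  have hline (k : I) : HasDerivAt (fun t : ℝ ↦ ⟪c k, x + t • v⟫) ⟪c k, v⟫ 0 := by
    simp only [inner_add_right, real_inner_smul_right]
    exact (hasDerivAt_mul_const _).const_add _
  refine (hasDerivAt_softmax hline i).congr_deriv ?_
  simp only [zero_smul, add_zero, inner_sub_right, sub_mul, real_inner_comm v,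
    Finset.sum_sub_distrib, ← Finset.mul_sum, sum_softmax, mul_one, mul_comm]

theorem integral_sum_softmax_mul_inner_nonpos {c d : I → E}
    (hcd : ∀ i k, ⟪d i - d k, c i - c k⟫ ≤ 0) :
    ∫ x, ∑ i, softmax (fun k ↦ ⟪c k, x⟫) i * ⟪d i, x⟫ ∂stdGaussian E ≤ 0 := by
  have stein : ∫ x, ∑ i, softmax (fun k ↦ ⟪c k, x⟫) i * ⟪d i, x⟫ ∂stdGaussian E =
      ∫ x, ∑ i, softmax (fun k ↦ ⟪c k, x⟫) i *
        ∑ k, softmax (fun k ↦ ⟪c k, x⟫) k * ⟪d i, c i - c k⟫ ∂stdGaussian E := by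
    rw [integral_finsetSum _ fun i _ ↦
        integrable_softmax_mul c i (integrable_inner_stdGaussian (d i)),
      integral_finsetSum _ fun i _ ↦ integrable_softmax_mul c i <| integrable_finsetSum _
        fun k _ ↦ (integrable_softmax c k).mul_const _]
    exact Finset.sum_congr rfl fun i _ ↦ integral_softmax_mul_inner c i (d i)
  rw [stein]
  refine integral_nonpos fun x ↦ ?_
  have hsum := sum_mul_sum_inner_sub (softmax fun k ↦ ⟪c k, x⟫) c d
  have hnonpos : ∑ i, ∑ k, softmax (fun k ↦ ⟪c k, x⟫) i * softmax (fun k ↦ ⟪c k, x⟫) k *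
      ⟪d i - d k, c i - c k⟫ ≤ 0 :=
    Finset.sum_nonpos fun i _ ↦ Finset.sum_nonpos fun k _ ↦ mul_nonpos_of_nonneg_of_nonpos
      (mul_nonneg (softmax_nonneg _ i) (softmax_nonneg _ k)) (hcd i k)
  rw [Pi.zero_apply]
  linarith

theorem integrable_logSumExp_inner (c : I → E) :
    Integrable (fun x ↦ logSumExp fun i ↦ ⟪c i, x⟫) (stdGaussian E) := by
  have hsup : Integrable (fun x ↦ ⨆ i, ⟪c i, x⟫) (stdGaussian E) :=
    integrable_iSup_of_finite fun i ↦ integrable_inner_stdGaussian (c i)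
  exact integrable_of_le_of_le
    (continuous_logSumExp_inner c).aestronglyMeasurable
    (.of_forall fun x ↦ iSup_le_logSumExp _) (.of_forall fun x ↦ logSumExp_le_iSup_add_log_card _)
    hsup (hsup.add (integrable_const _))

theorem hasDerivAt_integral_logSumExp_inner {c c' : ℝ → I → E} {K : ℝ}
    (hc : ∀ t i, HasDerivAt (c · i) (c' t i) t) (hc' : ∀ t i, ‖c' t i‖ ≤ K) (t : ℝ) :
    HasDerivAt (fun t ↦ ∫ x, logSumExp (fun i ↦ ⟪c t i, x⟫) ∂stdGaussian E)
      (∫ x, ∑ i, softmax (fun k ↦ ⟪c t k, x⟫) i * ⟪c' t i, x⟫ ∂stdGaussian E) t := by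
  refine (hasDerivAt_integral_of_dominated_loc_of_deriv_le
    (F := fun s x ↦ logSumExp fun i ↦ ⟪c s i, x⟫)
    (F' := fun s x ↦ ∑ i, softmax (fun k ↦ ⟪c s k, x⟫) i * ⟪c' s i, x⟫)
    (bound := fun x ↦ K * ‖x‖) Filter.univ_mem
    (.of_forall fun s ↦ (integrable_logSumExp_inner (c s)).aestronglyMeasurable)
    (integrable_logSumExp_inner (c t))
    (integrable_finsetSum _ fun i _ ↦ integrable_softmax_mul (c t) i
      (integrable_inner_stdGaussian (c' t i))).aestronglyMeasurable
    (.of_forall fun x s _ ↦ ?_) (IsGaussian.integrable_id.norm.const_mul K)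
    (.of_forall fun x s _ ↦ hasDerivAt_logSumExp fun i ↦ ?_)).2
  · calc ‖∑ i, softmax (fun k ↦ ⟪c s k, x⟫) i * ⟪c' s i, x⟫‖
        ≤ ∑ i, softmax (fun k ↦ ⟪c s k, x⟫) i * (K * ‖x‖) := by
          refine norm_sum_le_of_le _ fun i _ ↦ ?_
          rw [norm_mul, Real.norm_of_nonneg (softmax_nonneg _ i)]
          exact mul_le_mul_of_nonneg_left ((norm_inner_le_norm _ _).trans <|
            mul_le_mul_of_nonneg_right (hc' s i) (norm_nonneg x)) (softmax_nonneg _ i)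
      _ = K * ‖x‖ := by rw [← Finset.sum_mul, sum_softmax, one_mul]
  · simpa using (hc s i).inner ℝ (hasDerivAt_const s x)

theorem antitoneOn_integral_logSumExp_inner {D : Set ℝ} (hD : Convex ℝ D) {c c' : ℝ → I → E}
    {K : ℝ} (hc : ∀ t i, HasDerivAt (c · i) (c' t i) t) (hc' : ∀ t i, ‖c' t i‖ ≤ K)
    (hcontract : ∀ t ∈ D, ∀ i k, ⟪c' t i - c' t k, c t i - c t k⟫ ≤ 0) :
    AntitoneOn (fun t ↦ ∫ x, logSumExp (fun i ↦ ⟪c t i, x⟫) ∂stdGaussian E) D := by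
  have hderiv := hasDerivAt_integral_logSumExp_inner hc hc'
  refine antitoneOn_of_deriv_nonpos hD (fun t _ ↦ (hderiv t).continuousAt.continuousWithinAt)
    (fun t _ ↦ (hderiv t).differentiableAt.differentiableWithinAt) fun t ht ↦ ?_
  rw [(hderiv t).deriv]
  exact integral_sum_softmax_mul_inner_nonpos (hcontract t (interior_subset ht))

theorem integral_logSumExp_inner_le_of_norm_sub_le {a : I → E} {b : I → F}
    (hab : ∀ i k, ‖a i - a k‖ ≤ ‖b i - b k‖) :
    ∫ x, logSumExp (fun i ↦ ⟪a i, x⟫) ∂stdGaussian E ≤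
      ∫ y, logSumExp (fun i ↦ ⟪b i, y⟫) ∂stdGaussian F := by
  have hbound (θ : ℝ) (i : I) :
      ‖rotationPath (a i) (b i) (θ + Real.pi / 2)‖ ≤ ∑ i, (‖a i‖ + ‖b i‖) :=
    (norm_rotationPath_le _ _ _).trans <|
      Finset.single_le_sum (f := fun i ↦ ‖a i‖ + ‖b i‖) (fun _ _ ↦ by positivity)
        (Finset.mem_univ i)
  have hcontract (θ : ℝ) (hθ : θ ∈ Set.Icc 0 (Real.pi / 2)) (i k : I) :
      ⟪rotationPath (a i) (b i) (θ + Real.pi / 2) - rotationPath (a k) (b k) (θ + Real.pi / 2),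
        rotationPath (a i) (b i) θ - rotationPath (a k) (b k) θ⟫ ≤ 0 := by
    rw [rotationPath_sub, rotationPath_sub, inner_rotationPath_add_pi_div_two]
    refine mul_nonpos_of_nonneg_of_nonpos (mul_nonneg
      (Real.sin_nonneg_of_mem_Icc ⟨hθ.1, by linarith [hθ.2, Real.pi_pos]⟩)
      (Real.cos_nonneg_of_mem_Icc ⟨by linarith [hθ.1, Real.pi_pos], hθ.2⟩)) ?_
    exact sub_nonpos.2 (pow_le_pow_left₀ (norm_nonneg _) (hab i k) 2)
  have hendpoints := antitoneOn_integral_logSumExp_inner (convex_Icc 0 (Real.pi / 2))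
    (fun θ i ↦ hasDerivAt_rotationPath (a i) (b i) θ) hbound hcontract
    (Set.left_mem_Icc.2 Real.pi_div_two_pos.le) (Set.right_mem_Icc.2 Real.pi_div_two_pos.le)
    Real.pi_div_two_pos.le
  rw [← stdGaussian_map_fst (F := F), ← stdGaussian_map_snd (E := E) (F := F),
    integral_map (by fun_prop) (continuous_logSumExp_inner a).aestronglyMeasurable,
    integral_map (by fun_prop) (continuous_logSumExp_inner b).aestronglyMeasurable]
  simpa [rotationPath, WithLp.prod_inner_apply] using hendpoints

theorem integral_iSup_inner_le_add_log_card_of_norm_sub_le {a : I → E} {b : I → F}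
    (hab : ∀ i k, ‖a i - a k‖ ≤ ‖b i - b k‖) :
    ∫ x, ⨆ i, ⟪a i, x⟫ ∂stdGaussian E ≤
      ∫ y, ⨆ i, ⟪b i, y⟫ ∂stdGaussian F + Real.log (Fintype.card I) := by
  have hb : Integrable (fun y ↦ ⨆ i, ⟪b i, y⟫) (stdGaussian F) :=
    integrable_iSup_of_finite fun i ↦ integrable_inner_stdGaussian _
  calc ∫ x, ⨆ i, ⟪a i, x⟫ ∂stdGaussian E
      ≤ ∫ x, logSumExp (fun i ↦ ⟪a i, x⟫) ∂stdGaussian E :=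
        integral_mono (integrable_iSup_of_finite fun i ↦ integrable_inner_stdGaussian _)
          (integrable_logSumExp_inner _) fun x ↦ iSup_le_logSumExp _
    _ ≤ ∫ y, logSumExp (fun i ↦ ⟪b i, y⟫) ∂stdGaussian F :=
        integral_logSumExp_inner_le_of_norm_sub_le hab
    _ ≤ ∫ y, ((⨆ i, ⟪b i, y⟫) + Real.log (Fintype.card I)) ∂stdGaussian F :=
        integral_mono (integrable_logSumExp_inner _) (hb.add (integrable_const _))
          fun y ↦ logSumExp_le_iSup_add_log_card _
    _ = ∫ y, ⨆ i, ⟪b i, y⟫ ∂stdGaussian F + Real.log (Fintype.card I) := by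
        rw [integral_add hb (integrable_const _), integral_const, probReal_univ, one_smul]

end Finite

/-- The **Sudakov–Fernique inequality**. -/
theorem integral_iSup_inner_le_of_norm_sub_le [Finite I] {a : I → E} {b : I → F}
    (hab : ∀ i k, ‖a i - a k‖ ≤ ‖b i - b k‖) :
    ∫ x, ⨆ i, ⟪a i, x⟫ ∂stdGaussian E ≤ ∫ y, ⨆ i, ⟪b i, y⟫ ∂stdGaussian F := by
  rcases isEmpty_or_nonempty I with _ | _
  · simp
  cases nonempty_fintype I
  -- The error `log |I|` does not scale with the vectors, so it disappears after scaling by `n → ∞`.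
  have scaled (n : ℕ) : n * ∫ x, ⨆ i, ⟪a i, x⟫ ∂stdGaussian E ≤
      n * ∫ y, ⨆ i, ⟪b i, y⟫ ∂stdGaussian F + Real.log (Fintype.card I) := by
    have hscale (i k : I) : ‖(n : ℝ) • a i - (n : ℝ) • a k‖ ≤ ‖(n : ℝ) • b i - (n : ℝ) • b k‖ := by
      simpa only [← smul_sub, norm_smul] using
        mul_le_mul_of_nonneg_left (hab i k) (norm_nonneg (n : ℝ))
    simpa only [real_inner_smul_left, ← Real.mul_iSup_of_nonneg n.cast_nonneg, integral_const_mul]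
      using integral_iSup_inner_le_add_log_card_of_norm_sub_le hscale
  have hlim : Filter.Tendsto (fun n : ℕ ↦
      ∫ y, ⨆ i, ⟪b i, y⟫ ∂stdGaussian F + Real.log (Fintype.card I) / n) Filter.atTop
      (nhds (∫ y, ⨆ i, ⟪b i, y⟫ ∂stdGaussian F)) := by
    simpa only [add_zero] using
      tendsto_const_nhds.add (tendsto_const_div_atTop_nhds_zero_nat (Real.log (Fintype.card I)))
  refine ge_of_tendsto hlim ?_
  filter_upwards [Filter.eventually_gt_atTop 0] with n hn
  have hn' : (0 : ℝ) < n := by exact_mod_cast hn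
  rw [← mul_le_mul_iff_right₀ hn', mul_add, mul_div_cancel₀ _ hn'.ne']
  exact scaled n

end Comparison

section Chevet

variable {I E F H E' F' : Type*} [NormedAddCommGroup E] [InnerProductSpace ℝ E]
  [NormedAddCommGroup F] [InnerProductSpace ℝ F] [NormedAddCommGroup H] [InnerProductSpace ℝ H]

theorem norm_sub_le_of_inner_eq_mul {a : I → E} {b : I → F} {p : I → H}
    (hp : ∀ i k, ⟪p i, p k⟫ = ⟪a i, a k⟫ * ⟪b i, b k⟫) (i k : I) :
    ‖p i - p k‖ ≤ ‖WithLp.toLp 2 (‖b i‖ • a i, ‖a i‖ • b i) -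
      WithLp.toLp 2 (‖b k‖ • a k, ‖a k‖ • b k)‖ := by
  have hnorm (i : I) : ‖p i‖ ^ 2 = ‖a i‖ ^ 2 * ‖b i‖ ^ 2 := by
    simpa only [real_inner_self_eq_norm_sq] using hp i i
  have hgap : 0 ≤ (‖a i‖ * ‖a k‖ - ⟪a i, a k⟫) * (‖b i‖ * ‖b k‖ - ⟪b i, b k⟫) :=
    mul_nonneg (sub_nonneg.2 (real_inner_le_norm _ _)) (sub_nonneg.2 (real_inner_le_norm _ _))
  refine (sq_le_sq₀ (norm_nonneg _) (norm_nonneg _)).1 ?_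
  rw [← WithLp.toLp_sub, Prod.mk_sub_mk, WithLp.prod_norm_sq_eq_of_L2, WithLp.toLp_fst,
    WithLp.toLp_snd]
  simp only [norm_sub_sq_real, hp, hnorm, norm_smul, norm_norm, real_inner_smul_left,
    real_inner_smul_right, mul_pow]
  linarith [sq_nonneg (‖a i‖ * ‖b i‖ - ‖a k‖ * ‖b k‖)]

variable [NormedAddCommGroup E'] [InnerProductSpace ℝ E'] [NormedAddCommGroup F']
  [InnerProductSpace ℝ F']

theorem norm_le_opNorm_of_inner_eq {S : E →L[ℝ] E'} {u : E'} {a : E} (hu : ‖u‖ ≤ 1)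
    (ha : ∀ x, ⟪a, x⟫ = ⟪u, S x⟫) : ‖a‖ ≤ ‖S‖ := by
  by_contra! hlt
  have hpos : 0 < ‖a‖ := (norm_nonneg S).trans_lt hlt
  refine hlt.not_ge (le_of_mul_le_mul_right ?_ hpos)
  calc ‖a‖ * ‖a‖ = ⟪u, S a⟫ := by rw [← ha, real_inner_self_eq_norm_mul_norm]
    _ ≤ ‖u‖ * ‖S a‖ := real_inner_le_norm _ _
    _ ≤ 1 * (‖S‖ * ‖a‖) := by gcongr; exact S.le_opNorm a
    _ = ‖S‖ * ‖a‖ := one_mul _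

variable [FiniteDimensional ℝ E] [MeasurableSpace E] [BorelSpace E] [FiniteDimensional ℝ F]
  [MeasurableSpace F] [BorelSpace F] [FiniteDimensional ℝ H] [MeasurableSpace H] [BorelSpace H]

/-- **Chevet's inequality**, in terms of the vectors `p i` representing the elementary tensors
`S† (u i) ⊗ T† (v i)`. -/
theorem integral_iSup_inner_le_opNorm_mul_integral_norm_add [Finite I] {S : E →L[ℝ] E'}
    {T : F →L[ℝ] F'} {u : I → E'} {v : I → F'} {a : I → E} {b : I → F} {p : I → H}
    (hu : ∀ i, ‖u i‖ ≤ 1) (hv : ∀ i, ‖v i‖ ≤ 1) (ha : ∀ i x, ⟪a i, x⟫ = ⟪u i, S x⟫)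
    (hb : ∀ i y, ⟪b i, y⟫ = ⟪v i, T y⟫) (hp : ∀ i k, ⟪p i, p k⟫ = ⟪a i, a k⟫ * ⟪b i, b k⟫) :
    ∫ z, ⨆ i, ⟪p i, z⟫ ∂stdGaussian H ≤
      ‖T‖ * ∫ x, ‖S x‖ ∂stdGaussian E + ‖S‖ * ∫ y, ‖T y‖ ∂stdGaussian F := by
  let c (i : I) : WithLp 2 (E × F) := WithLp.toLp 2 (‖b i‖ • a i, ‖a i‖ • b i)
  have hinner (i : I) (w : WithLp 2 (E × F)) : ⟪c i, w⟫ ≤ ‖T‖ * ‖S w.fst‖ + ‖S‖ * ‖T w.snd‖ := by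
    have haS : ⟪a i, w.fst⟫ ≤ ‖S w.fst‖ := ha i _ ▸ (real_inner_le_norm _ _).trans
      (mul_le_of_le_one_left (norm_nonneg _) (hu i))
    have hbT : ⟪b i, w.snd⟫ ≤ ‖T w.snd‖ := hb i _ ▸ (real_inner_le_norm _ _).trans
      (mul_le_of_le_one_left (norm_nonneg _) (hv i))
    simp only [c, WithLp.prod_inner_apply, real_inner_smul_left]
    calc ‖b i‖ * ⟪a i, w.fst⟫ + ‖a i‖ * ⟪b i, w.snd⟫
        ≤ ‖b i‖ * ‖S w.fst‖ + ‖a i‖ * ‖T w.snd‖ := by gcongr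
      _ ≤ ‖T‖ * ‖S w.fst‖ + ‖S‖ * ‖T w.snd‖ := by
          gcongr
          exacts [norm_le_opNorm_of_inner_eq (hv i) (hb i),
            norm_le_opNorm_of_inner_eq (hu i) (ha i)]
  have hS : Integrable (fun w : WithLp 2 (E × F) ↦ ‖S w.fst‖) (stdGaussian _) :=
    (S.comp (WithLp.fstL 2 ℝ E F)).integrable_comp IsGaussian.integrable_id |>.norm
  have hT : Integrable (fun w : WithLp 2 (E × F) ↦ ‖T w.snd‖) (stdGaussian _) :=
    (T.comp (WithLp.sndL 2 ℝ E F)).integrable_comp IsGaussian.integrable_id |>.norm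
  calc ∫ z, ⨆ i, ⟪p i, z⟫ ∂stdGaussian H
      ≤ ∫ w, ⨆ i, ⟪c i, w⟫ ∂stdGaussian (WithLp 2 (E × F)) :=
        integral_iSup_inner_le_of_norm_sub_le (norm_sub_le_of_inner_eq_mul hp)
    _ ≤ ∫ w, (‖T‖ * ‖S w.fst‖ + ‖S‖ * ‖T w.snd‖) ∂stdGaussian (WithLp 2 (E × F)) :=
        integral_mono (integrable_iSup_of_finite fun i ↦ integrable_inner_stdGaussian _)
          ((hS.const_mul _).add (hT.const_mul _)) fun w ↦
            Real.iSup_le (hinner · w) (by positivity)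
    _ = ‖T‖ * ∫ x, ‖S x‖ ∂stdGaussian E + ‖S‖ * ∫ y, ‖T y‖ ∂stdGaussian F := by
        rw [integral_add (hS.const_mul _) (hT.const_mul _), integral_const_mul, integral_const_mul,
          ← stdGaussian_map_fst (E := E) (F := F), ← stdGaussian_map_snd (E := E) (F := F),
          integral_map (by fun_prop) (by fun_prop), integral_map (by fun_prop) (by fun_prop)]

end Chevet

section Norming

variable {E F : Type*} [NormedAddCommGroup E] [InnerProductSpace ℝ E] [NormedAddCommGroup F]
  [InnerProductSpace ℝ F]

theorem inner_apply_sub_inner_apply_le (L : E →L[ℝ] F) {x x₀ : E} {y y₀ : F} (hx : ‖x‖ ≤ 1)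
    (hy₀ : ‖y₀‖ ≤ 1) :
    ⟪y, L x⟫ - ⟪y₀, L x₀⟫ ≤ (‖x - x₀‖ + ‖y - y₀‖) * ‖L‖ := by
  calc ⟪y, L x⟫ - ⟪y₀, L x₀⟫ = ⟪y₀, L (x - x₀)⟫ + ⟪y - y₀, L x⟫ := by
        simp only [map_sub, inner_sub_left, inner_sub_right]
        ring
    _ ≤ ‖y₀‖ * ‖L (x - x₀)‖ + ‖y - y₀‖ * ‖L x‖ :=
        add_le_add (real_inner_le_norm _ _) (real_inner_le_norm _ _)
    _ ≤ 1 * (‖L‖ * ‖x - x₀‖) + ‖y - y₀‖ * (‖L‖ * 1) := by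
        gcongr
        exacts [L.le_opNorm _, L.le_opNorm_of_le hx]
    _ = (‖x - x₀‖ + ‖y - y₀‖) * ‖L‖ := by ring

theorem exists_finite_norming_set [FiniteDimensional ℝ E] [FiniteDimensional ℝ F] {ε : ℝ}
    (hε : 0 < ε) : ∃ t : Set (E × F), t.Finite ∧ (∀ q ∈ t, ‖q‖ ≤ 1) ∧
      ∀ L : E →L[ℝ] F, (1 - ε) * ‖L‖ ≤ ⨆ q : t, ⟪q.1.2, L q.1.1⟫ := by
  obtain ⟨t, ht_sub, ht_fin, ht_cover⟩ :=
    (isCompact_closedBall (0 : E × F) 1).finite_cover_balls (half_pos hε)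
  have ht_unit (q : E × F) (hq : q ∈ t) : ‖q‖ ≤ 1 := mem_closedBall_zero_iff.1 (ht_sub hq)
  have := ht_fin.to_subtype
  refine ⟨t, ht_fin, ht_unit, fun L ↦ ?_⟩
  have hle (x : E) (hx : ‖x‖ ≤ 1) : ‖L x‖ ≤ (⨆ q : t, ⟪q.1.2, L q.1.1⟫) + ε * ‖L‖ := by
    obtain ⟨y, hy, hyL⟩ : ∃ y : F, ‖y‖ ≤ 1 ∧ ⟪y, L x⟫ = ‖L x‖ := by
      refine ⟨‖L x‖⁻¹ • L x, ?_, ?_⟩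
      · rw [norm_smul, norm_inv, norm_norm]
        exact inv_mul_le_one
      · rw [real_inner_smul_left, real_inner_self_eq_norm_mul_norm, ← mul_assoc,
          inv_mul_mul_self]
    have hxy : (x, y) ∈ Metric.closedBall (0 : E × F) 1 :=
      mem_closedBall_zero_iff.2 (norm_prod_le_iff.2 ⟨hx, hy⟩)
    obtain ⟨⟨x₀, y₀⟩, hmem, hball⟩ := Set.mem_iUnion₂.1 (ht_cover hxy)
    rw [Metric.mem_ball, Prod.dist_eq, max_lt_iff, dist_eq_norm, dist_eq_norm] at hball
    have hnear := inner_apply_sub_inner_apply_le L (y := y) (x₀ := x₀) hx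
      (norm_prod_le_iff.1 (ht_unit _ hmem)).2
    have hsup : ⟪y₀, L x₀⟫ ≤ ⨆ q : t, ⟪q.1.2, L q.1.1⟫ :=
      le_ciSup (f := fun q : t ↦ ⟪q.1.2, L q.1.1⟫) (Set.finite_range _).bddAbove ⟨_, hmem⟩
    have hclose : (‖x - x₀‖ + ‖y - y₀‖) * ‖L‖ ≤ ε * ‖L‖ := by
      gcongr
      linarith
    linarith
  have hnorm := L.opNorm_le_of_unit_norm ((norm_nonneg _).trans (hle 0 (by simp)))
    fun x hx ↦ hle x hx.le
  linarith

end Norming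

section Operator

variable {E F H E' F' : Type*}
  [NormedAddCommGroup E] [InnerProductSpace ℝ E] [FiniteDimensional ℝ E] [MeasurableSpace E]
  [BorelSpace E]
  [NormedAddCommGroup F] [InnerProductSpace ℝ F] [FiniteDimensional ℝ F] [MeasurableSpace F]
  [BorelSpace F]
  [NormedAddCommGroup H] [InnerProductSpace ℝ H] [FiniteDimensional ℝ H] [MeasurableSpace H]
  [BorelSpace H]
  [NormedAddCommGroup E'] [InnerProductSpace ℝ E'] [FiniteDimensional ℝ E']
  [NormedAddCommGroup F'] [InnerProductSpace ℝ F'] [FiniteDimensional ℝ F']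

/-- **Chevet's inequality** for a random operator `X` whose bilinear form is Gaussian with
covariance `⟪S† u, S† u'⟫ * ⟪T† v, T† v'⟫`. -/
theorem integral_opNorm_le_opNorm_mul_integral_norm_add {X : H → F' →L[ℝ] E'} {S : E →L[ℝ] E'}
    {T : F →L[ℝ] F'} {a : E' → E} {b : F' → F} {p : E' → F' → H}
    (ha : ∀ u x, ⟪a u, x⟫ = ⟪u, S x⟫) (hb : ∀ v y, ⟪b v, y⟫ = ⟪v, T y⟫)
    (hp : ∀ u u' v v', ⟪p u v, p u' v'⟫ = ⟪a u, a u'⟫ * ⟪b v, b v'⟫)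
    (hX : ∀ u v z, ⟪u, X z v⟫ = ⟪p u v, z⟫) :
    ∫ z, ‖X z‖ ∂stdGaussian H ≤
      ‖T‖ * ∫ x, ‖S x‖ ∂stdGaussian E + ‖S‖ * ∫ y, ‖T y‖ ∂stdGaussian F := by
  have hnet (ε : ℝ) (hε : ε ∈ Set.Ioo (0 : ℝ) 1) : (1 - ε) * ∫ z, ‖X z‖ ∂stdGaussian H ≤
      ‖T‖ * ∫ x, ‖S x‖ ∂stdGaussian E + ‖S‖ * ∫ y, ‖T y‖ ∂stdGaussian F := by
    obtain ⟨t, ht_fin, ht_unit, ht_norming⟩ := exists_finite_norming_set (E := F') (F := E') hε.1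
    have := ht_fin.to_subtype
    calc (1 - ε) * ∫ z, ‖X z‖ ∂stdGaussian H
        ≤ ∫ z, ⨆ q : t, ⟪p q.1.2 q.1.1, z⟫ ∂stdGaussian H := by
          rw [← integral_const_mul]
          simp only [← hX]
          refine integral_mono_of_nonneg
            (.of_forall fun z ↦ mul_nonneg (sub_nonneg.2 hε.2.le) (norm_nonneg _)) ?_
            (.of_forall fun z ↦ ht_norming (X z))
          simp only [hX]
          exact integrable_iSup_of_finite fun q ↦ integrable_inner_stdGaussian _
      _ ≤ ‖T‖ * ∫ x, ‖S x‖ ∂stdGaussian E + ‖S‖ * ∫ y, ‖T y‖ ∂stdGaussian F :=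
          integral_iSup_inner_le_opNorm_mul_integral_norm_add (a := fun q : t ↦ a q.1.2)
            (b := fun q ↦ b q.1.1) (fun q ↦ (norm_prod_le_iff.1 (ht_unit q.1 q.2)).2)
            (fun q ↦ (norm_prod_le_iff.1 (ht_unit q.1 q.2)).1) (fun q ↦ ha _) (fun q ↦ hb _)
            fun q r ↦ hp _ _ _ _
  have hlim : Filter.Tendsto (fun ε : ℝ ↦ (1 - ε) * ∫ z, ‖X z‖ ∂stdGaussian H)
      (nhdsWithin 0 (Set.Ioi 0)) (nhds (∫ z, ‖X z‖ ∂stdGaussian H)) :=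
    tendsto_nhdsWithin_of_tendsto_nhds <| Continuous.tendsto' (by fun_prop) _ _ (by simp)
  exact le_of_tendsto hlim (Filter.eventually_of_mem (Ioo_mem_nhdsGT one_pos) hnet)

end Operator

section Frobenius

variable {E : Type*} [NormedAddCommGroup E] [InnerProductSpace ℝ E] [FiniteDimensional ℝ E]
  [MeasurableSpace E] [BorelSpace E]

theorem integrable_inner_sq_stdGaussian (v : E) :
    Integrable (fun x ↦ ⟪v, x⟫ ^ 2) (stdGaussian E) :=
  (IsGaussian.memLp_two_id.const_inner v).integrable_sq

theorem integral_inner_sq_stdGaussian (v : E) : ∫ x, ⟪v, x⟫ ^ 2 ∂stdGaussian E = ‖v‖ ^ 2 := by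
  have hline (x : E) : HasLineDerivAt ℝ (fun x ↦ ⟪v, x⟫) ⟪v, v⟫ x v := by
    simpa using ((innerSL ℝ v).hasFDerivAt (x := x)).hasLineDerivAt v
  have stein := integral_inner_mul_stdGaussian hline
    (by simpa only [sq] using integrable_inner_sq_stdGaussian v) (integrable_inner_stdGaussian v)
    (integrable_const _)
  simpa [← sq, real_inner_self_eq_norm_sq] using stein

theorem sq_integral_le {Ω : Type*} {m : MeasurableSpace Ω} {μ : Measure Ω} [IsProbabilityMeasure μ]
    {f : Ω → ℝ} (hf : MemLp f 2 μ) : (∫ x, f x ∂μ) ^ 2 ≤ ∫ x, f x ^ 2 ∂μ := by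
  have hvar := variance_nonneg f μ
  rw [variance_eq_sub hf] at hvar
  exact sub_nonneg.1 hvar

theorem integral_norm_toEuclideanLin_le_frobNorm {m n : Type*} [Fintype m] [Fintype n]
    [DecidableEq n] (A : Matrix m n ℝ) :
    ∫ x, ‖Matrix.toEuclideanLin A x‖ ∂stdGaussian (EuclideanSpace ℝ n) ≤ frobNorm A := by
  have hsq (x : EuclideanSpace ℝ n) :
      ‖Matrix.toEuclideanLin A x‖ ^ 2 = ∑ i, ⟪WithLp.toLp 2 (A i), x⟫ ^ 2 := by
    rw [EuclideanSpace.real_norm_sq_eq]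
    simp [Matrix.mulVec, dotProduct, PiLp.inner_apply, mul_comm]
  have hmem : MemLp (fun x ↦ ‖Matrix.toEuclideanLin A x‖) 2 (stdGaussian (EuclideanSpace ℝ n)) :=
    ((LinearMap.toContinuousLinearMap (Matrix.toEuclideanLin A)).comp_memLp'
      IsGaussian.memLp_two_id).norm
  refine Real.le_sqrt_of_sq_le ((sq_integral_le hmem).trans_eq ?_)
  simp only [hsq]
  rw [integral_finsetSum _ fun i _ ↦ integrable_inner_sq_stdGaussian _]
  simp only [integral_inner_sq_stdGaussian, EuclideanSpace.real_norm_sq_eq]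

end Frobenius

section Matrices

variable {m k n l : Type*} [Fintype k] [Fintype l]

variable (k l) in
/-- The identification of `ℝ^(k × l)` with the `k × l` matrices, through which the Euclidean inner
product becomes the Frobenius one. -/
noncomputable def euclideanEquivMatrix : EuclideanSpace ℝ (k × l) ≃ᵐ Matrix k l ℝ :=
  (MeasurableEquiv.toLp 2 (k × l → ℝ)).symm.trans (MeasurableEquiv.curry k l ℝ)

theorem measurePreserving_euclideanEquivMatrix :
    MeasurePreserving (euclideanEquivMatrix k l) (stdGaussian (EuclideanSpace ℝ (k × l)))
      (stdGaussianMatrix k l) := by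
  have hcurry := Measure.infinitePi_map_curry (ι := k) (κ := l) (X := ℝ)
    (fun _ _ ↦ gaussianReal 0 1)
  simp only [Measure.infinitePi_eq_pi] at hcurry
  refine ⟨(euclideanEquivMatrix k l).measurable, ?_⟩
  rw [stdGaussianMatrix, ← hcurry, ← map_pi_eq_stdGaussian,
    Measure.map_map (euclideanEquivMatrix k l).measurable (by fun_prop)]
  rfl

theorem inner_euclideanEquivMatrix_symm (A : Matrix k l ℝ) (z : EuclideanSpace ℝ (k × l)) :
    ⟪(euclideanEquivMatrix k l).symm A, z⟫ = ∑ i, ∑ j, A i j * euclideanEquivMatrix k l z i j := by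
  simp only [PiLp.inner_apply, Fintype.sum_prod_type, RCLike.inner_apply, conj_trivial]
  exact Finset.sum_congr rfl fun i _ ↦ Finset.sum_congr rfl fun j _ ↦ mul_comm _ _

theorem inner_euclideanEquivMatrix_symm_vecMulVec (a a' : EuclideanSpace ℝ k)
    (b b' : EuclideanSpace ℝ l) :
    ⟪(euclideanEquivMatrix k l).symm (vecMulVec a b),
      (euclideanEquivMatrix k l).symm (vecMulVec a' b')⟫ = ⟪a, a'⟫ * ⟪b, b'⟫ := by
  rw [inner_euclideanEquivMatrix_symm, MeasurableEquiv.apply_symm_apply]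
  simp only [vecMulVec_apply, PiLp.inner_apply, Finset.sum_mul_sum, RCLike.inner_apply,
    conj_trivial, mul_mul_mul_comm, mul_comm]

theorem inner_toEuclideanLin_euclideanEquivMatrix [DecidableEq l] (a : EuclideanSpace ℝ k)
    (b : EuclideanSpace ℝ l) (z : EuclideanSpace ℝ (k × l)) :
    ⟪a, Matrix.toEuclideanLin (euclideanEquivMatrix k l z) b⟫ =
      ⟪(euclideanEquivMatrix k l).symm (vecMulVec a b), z⟫ := by
  rw [inner_euclideanEquivMatrix_symm]
  simp only [PiLp.inner_apply, RCLike.inner_apply, conj_trivial, vecMulVec_apply,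
    Matrix.toLpLin_apply, Matrix.mulVec, dotProduct, Finset.sum_mul]
  exact Finset.sum_congr rfl fun i _ ↦ Finset.sum_congr rfl fun j _ ↦ by ring

theorem inner_toEuclideanLin_transpose [Fintype m] [DecidableEq m] [DecidableEq k]
    (A : Matrix m k ℝ) (u : EuclideanSpace ℝ m) (x : EuclideanSpace ℝ k) :
    ⟪Matrix.toEuclideanLin Aᵀ u, x⟫ = ⟪u, Matrix.toEuclideanLin A x⟫ := by
  rw [← conjTranspose_eq_transpose_of_trivial, Matrix.toEuclideanLin_conjTranspose_eq_adjoint,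
    LinearMap.adjoint_inner_left]

theorem inner_toEuclideanLin_mul_mul_transpose [Fintype m] [DecidableEq m] [Fintype n]
    [DecidableEq n] (S : Matrix m k ℝ) (T : Matrix n l ℝ) (u : EuclideanSpace ℝ m)
    (v : EuclideanSpace ℝ n) (z : EuclideanSpace ℝ (k × l)) :
    ⟪u, Matrix.toEuclideanLin (S * euclideanEquivMatrix k l z * Tᵀ) v⟫ =
      ⟪(euclideanEquivMatrix k l).symm
        (vecMulVec (Matrix.toEuclideanLin Sᵀ u) (Matrix.toEuclideanLin Tᵀ v)), z⟫ := by
  classical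
  rw [← inner_toEuclideanLin_euclideanEquivMatrix, inner_toEuclideanLin_transpose]
  simp only [Matrix.toLpLin_mul_same, LinearMap.comp_apply]

theorem expected_opNorm_gaussian_sandwich_general [Fintype m] [Fintype n] [DecidableEq k]
    [DecidableEq l] [DecidableEq n] (S : Matrix m k ℝ) (T : Matrix n l ℝ) :
    ∫ G, specNorm (S * G * Tᵀ) ∂stdGaussianMatrix k l ≤
      specNorm S * frobNorm T + frobNorm S * specNorm T := by
  classical
  have hchevet : ∫ z, specNorm (S * euclideanEquivMatrix k l z * Tᵀ)
      ∂stdGaussian (EuclideanSpace ℝ (k × l)) ≤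
      specNorm T * ∫ x, ‖Matrix.toEuclideanLin S x‖ ∂stdGaussian (EuclideanSpace ℝ k) +
        specNorm S * ∫ y, ‖Matrix.toEuclideanLin T y‖ ∂stdGaussian (EuclideanSpace ℝ l) :=
    integral_opNorm_le_opNorm_mul_integral_norm_add
      (X := fun z ↦ LinearMap.toContinuousLinearMap
        (Matrix.toEuclideanLin (S * euclideanEquivMatrix k l z * Tᵀ)))
      (S := LinearMap.toContinuousLinearMap (Matrix.toEuclideanLin S))
      (T := LinearMap.toContinuousLinearMap (Matrix.toEuclideanLin T))
      (p := fun u v ↦ (euclideanEquivMatrix k l).symm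
        (vecMulVec (Matrix.toEuclideanLin Sᵀ u) (Matrix.toEuclideanLin Tᵀ v)))
      (inner_toEuclideanLin_transpose S) (inner_toEuclideanLin_transpose T)
      (fun _ _ _ _ ↦ inner_euclideanEquivMatrix_symm_vecMulVec _ _ _ _)
      (inner_toEuclideanLin_mul_mul_transpose S T)
  calc ∫ G, specNorm (S * G * Tᵀ) ∂stdGaussianMatrix k l
      = ∫ z, specNorm (S * euclideanEquivMatrix k l z * Tᵀ)
          ∂stdGaussian (EuclideanSpace ℝ (k × l)) :=
        (measurePreserving_euclideanEquivMatrix.integral_comp' _).symm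
    _ ≤ _ := hchevet
    _ ≤ specNorm T * frobNorm S + specNorm S * frobNorm T :=
        add_le_add
          (mul_le_mul_of_nonneg_left (integral_norm_toEuclideanLin_le_frobNorm S) (norm_nonneg _))
          (mul_le_mul_of_nonneg_left (integral_norm_toEuclideanLin_le_frobNorm T) (norm_nonneg _))
    _ = specNorm S * frobNorm T + frobNorm S * specNorm T := by ring

end Matrices

/-- `E‖S G Tᵀ‖ ≤ ‖S‖‖T‖_F + ‖S‖_F‖T‖` for a standard Gaussian
matrix `G`. -/
theorem expected_opNorm_gaussian_sandwich {m k n l : ℕ}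
    (S : Matrix (Fin m) (Fin k) ℝ) (T : Matrix (Fin n) (Fin l) ℝ) :
    ∫ G, specNorm (S * G * Tᵀ) ∂(stdGaussianMatrix (Fin k) (Fin l)) ≤
      specNorm S * frobNorm T + frobNorm S * specNorm T :=
  expected_opNorm_gaussian_sandwich_general S T
end

section
/- Let G be an r×(r+p) standard Gaussian random matrix with p ≥ 2, and let G† = Gᵀ(GGᵀ)⁻¹ denote its Moore–Penrose pseudoinverse (GGᵀ is invertible almost surely; on the null event where it is singular, (GGᵀ)⁻¹ is interpreted as 0). Then E‖G†‖_F² = r/(p−1), where ‖·‖_F is the Frobenius norm. -/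
open Matrix MeasureTheory ProbabilityTheory

/-- Moore–Penrose pseudoinverse of a full-row-rank matrix: `G† = Gᵀ(GGᵀ)⁻¹`
(the matrix inverse is `0` if `GGᵀ` is singular). -/
noncomputable def pinvRow {r k : Type*} [Fintype r] [Fintype k] [DecidableEq r]
    (G : Matrix r k ℝ) : Matrix k r ℝ :=
  Gᵀ * (G * Gᵀ)⁻¹

/-!
The Gram matrix of the rows of `G` is `G Gᵀ`, and `‖G†‖_F² = tr (G Gᵀ)⁻¹`. For linearly independent
rows the `i`-th diagonal entry of `(G Gᵀ)⁻¹` is `δ⁻²`, where `δ` is the distance from row `i` to the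
span `U` of the other rows. Row `i` is independent of `U`, so its projection to the
`(p + 1)`-dimensional space `Uᗮ` is a standard Gaussian vector, and each diagonal entry has
expectation `E ‖x‖⁻² = 1 / ((p + 1) - 2)`. This last value is a Laplace transform computation:
`‖x‖⁻² = ½ ∫_{c > 1} exp (-(c - 1) ‖x‖² / 2) dc`, and `E exp (-(c - 1) ‖x‖² / 2) = c ^ (-d / 2)`
in dimension `d`.
-/

open Module

section Resampling

variable {ι : Type*} [Fintype ι] [DecidableEq ι] {X : ι → Type*} [∀ i, MeasurableSpace (X i)]
  (μ : ∀ i, Measure (X i)) [∀ i, SigmaFinite (μ i)] (i : ι) [IsProbabilityMeasure (μ i)]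

lemma measurePreserving_update_pi :
    MeasurePreserving (fun p : (∀ j, X j) × X i ↦ Function.update p.1 i p.2)
      ((Measure.pi μ).prod (μ i)) (Measure.pi μ) where
  measurable := measurable_update'
  map_eq := by
    refine (Measure.pi_eq fun s hs ↦ ?_).symm
    have preimage_box : (fun p : (∀ j, X j) × X i ↦ Function.update p.1 i p.2) ⁻¹' Set.univ.pi s =
        Set.univ.pi (Function.update s i Set.univ) ×ˢ s i := by
      ext p
      simp only [Set.mem_preimage, Set.mem_prod, Set.mem_univ_pi]
      rw [Function.forall_update_iff p.1 (p := fun j y ↦ y ∈ s j),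
        Function.forall_update_iff s (p := fun j t ↦ p.1 j ∈ t)]
      simp [and_comm]
    rw [Measure.map_apply measurable_update' (.univ_pi hs), preimage_box, Measure.prod_prod,
      Measure.pi_pi, mul_comm, Fintype.prod_eq_mul_prod_compl i (fun j ↦ μ j (s j)),
      Fintype.prod_eq_mul_prod_compl i, Function.update_self, measure_univ, one_mul]
    congr 1
    refine Finset.prod_congr rfl fun j hj ↦ ?_
    rw [Function.update_of_ne (by simpa using hj)]

lemma lintegral_pi_eq_lintegral_lintegral_update {f : (∀ j, X j) → ENNReal}
    (hf : Measurable f) :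
    ∫⁻ x, f x ∂Measure.pi μ =
      ∫⁻ x, ∫⁻ y, f (Function.update x i y) ∂μ i ∂Measure.pi μ := by
  rw [← (measurePreserving_update_pi μ i).lintegral_comp hf]
  exact lintegral_prod _ (hf.comp measurable_update').aemeasurable

lemma ae_pi_iff_ae_ae_update {p : (∀ j, X j) → Prop} (hp : MeasurableSet {x | p x}) :
    (∀ᵐ x ∂Measure.pi μ, p x) ↔
      ∀ᵐ x ∂Measure.pi μ, ∀ᵐ y ∂μ i, p (Function.update x i y) := by
  have hmp := measurePreserving_update_pi μ i
  rw [← Measure.ae_prod_iff_ae_ae (p := fun z ↦ p (Function.update z.1 i z.2))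
    (hmp.measurable hp), ← ae_map_iff hmp.aemeasurable hp, hmp.map_eq]

end Resampling

lemma eqOn_update_of_notMem {ι : Type*} [DecidableEq ι] {X : Type*} {s : Set ι} {i : ι} (hi : i ∉ s)
    {f : ι → X} {x : X} : Set.EqOn (Function.update f i x) f s :=
  fun _ hj ↦ Function.update_of_ne (ne_of_mem_of_not_mem hj hi) _ _

section LinearIndependent

variable {ι K V : Type*} [DecidableEq ι] [DivisionRing K] [AddCommGroup V] [Module K V]
  {i : ι} {v : ι → V} {x : V}

lemma linearIndepOn_insert_update_iff {s : Set ι} (hi : i ∉ s) :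
    LinearIndepOn K (Function.update v i x) (insert i s) ↔
      LinearIndepOn K v s ∧ x ∉ Submodule.span K (v '' s) := by
  rw [linearIndepOn_insert hi, linearIndepOn_congr (eqOn_update_of_notMem hi),
    (eqOn_update_of_notMem hi).image_eq, Function.update_self]

lemma linearIndependent_update_iff :
    LinearIndependent K (Function.update v i x) ↔
      LinearIndepOn K v {i}ᶜ ∧ x ∉ Submodule.span K (v '' {i}ᶜ) := by
  rw [← linearIndepOn_insert_update_iff (i := i) (s := {i}ᶜ) (by simp), Set.insert_eq,
    Set.union_compl_self, linearIndepOn_univ_iff]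

end LinearIndependent

section AELinearIndependent

variable {ι 𝕜 E : Type*} [NontriviallyNormedField 𝕜] [CompleteSpace 𝕜] [NormedAddCommGroup E]
  [NormedSpace 𝕜 E] [SecondCountableTopology E] [MeasurableSpace E] [BorelSpace E]

lemma measurableSet_setOf_linearIndepOn [Finite ι] (s : Set ι) :
    MeasurableSet {v : ι → E | LinearIndepOn 𝕜 v s} := by
  have hcont : Continuous fun (v : ι → E) (i : s) ↦ v i := by fun_prop
  exact (isOpen_setOfPred_linearIndependent.preimage hcont).measurableSet

lemma ae_linearIndependent_pi [Fintype ι] (μ : ι → Measure E) [∀ i, IsProbabilityMeasure (μ i)]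
    (hμ : ∀ i, ∀ U : Submodule 𝕜 E, U ≠ ⊤ → μ i U = 0) (hcard : Fintype.card ι ≤ finrank 𝕜 E) :
    ∀ᵐ v ∂Measure.pi μ, LinearIndependent 𝕜 v := by
  classical
  suffices h : ∀ s : Finset ι, ∀ᵐ v ∂Measure.pi μ, LinearIndepOn 𝕜 v (s : Set ι) by
    simpa [linearIndepOn_univ_iff] using h Finset.univ
  intro s
  induction s using Finset.induction_on with
  | empty => simp
  | insert i s hi ih =>
    rw [ae_pi_iff_ae_ae_update μ i (measurableSet_setOf_linearIndepOn _)]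
    filter_upwards [ih] with v hv
    have span_ne_top : Submodule.span 𝕜 (v '' s) ≠ ⊤ := by
      intro htop
      have hle : finrank 𝕜 (Submodule.span 𝕜 (v '' s)) ≤ s.card := by
        rw [← Finset.coe_image]
        exact (finrank_span_finset_le_card _).trans Finset.card_image_le
      rw [htop, finrank_top] at hle
      have hlt := Finset.card_lt_univ_of_notMem hi
      omega
    filter_upwards [measure_eq_zero_iff_ae_notMem.1 (hμ i _ span_ne_top)] with x hx
    rw [Finset.coe_insert, linearIndepOn_insert_update_iff (by exact_mod_cast hi)]
    exact ⟨hv, hx⟩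

end AELinearIndependent

section Gaussian

variable {E : Type*} [NormedAddCommGroup E] [InnerProductSpace ℝ E] [FiniteDimensional ℝ E]
  [MeasurableSpace E] [BorelSpace E]

lemma measurePreserving_orthogonalProjectionOnto_stdGaussian (U : Submodule ℝ E) :
    MeasurePreserving U.orthogonalProjectionOnto (stdGaussian E) (stdGaussian U) where
  measurable := by fun_prop
  map_eq := by
    refine Measure.ext_of_charFun (funext fun u ↦ ?_)
    have inner_projection (x : E) : inner ℝ (U.orthogonalProjectionOnto x) u = inner ℝ x (u : E) :=
      Submodule.inner_orthogonalProjectionOnto_eq_of_mem_right u x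
    rw [charFun_apply, integral_map (by fun_prop) (by fun_prop)]
    simp_rw [inner_projection]
    rw [← charFun_apply, charFun_stdGaussian, charFun_stdGaussian, Submodule.coe_norm]

lemma nullSingletonClass_stdGaussian [Nontrivial E] : NullSingletonClass (stdGaussian E) := by
  refine IsGaussian.nullSingletonClass fun x hx ↦ ?_
  obtain ⟨y, hy⟩ := exists_ne (0 : E)
  have variance_eq := variance_dual_stdGaussian (innerSL ℝ y)
  rw [hx, variance_dirac, innerSL_apply_norm] at variance_eq
  exact pow_ne_zero 2 (norm_ne_zero_iff.2 hy) variance_eq.symm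

lemma stdGaussian_submodule_eq_zero {U : Submodule ℝ E} (hU : U ≠ ⊤) : stdGaussian E U = 0 := by
  have : Nontrivial Uᗮ := Submodule.nontrivial_iff_ne_bot.2 (by simpa using hU)
  have := nullSingletonClass_stdGaussian (E := Uᗮ)
  have hpre : Uᗮ.orthogonalProjectionOnto ⁻¹' {0} = (U : Set E) := by
    ext x
    simp
  rw [← hpre, (measurePreserving_orthogonalProjectionOnto_stdGaussian Uᗮ).measure_preimage
    (by measurability)]
  simp

lemma integral_exp_neg_mul_sq_gaussianReal {c : ℝ} (hc : 0 < c) :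
    ∫ x, Real.exp (-((c - 1) / 2) * x ^ 2) ∂gaussianReal 0 1 = c ^ (-(1 / 2) : ℝ) := by
  have density_mul_exp (x : ℝ) : gaussianPDFReal 0 1 x • Real.exp (-((c - 1) / 2) * x ^ 2) =
      (√(2 * Real.pi))⁻¹ * Real.exp (-(c / 2) * x ^ 2) := by
    rw [gaussianPDFReal, smul_eq_mul, mul_assoc, ← Real.exp_add]
    simp only [NNReal.coe_one, mul_one, sub_zero]
    congr 2
    ring
  rw [integral_gaussianReal_eq_integral_smul one_ne_zero]
  simp_rw [density_mul_exp]
  rw [integral_const_mul, integral_gaussian, Real.rpow_neg hc.le, ← Real.sqrt_eq_rpow,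
    ← Real.sqrt_inv, ← Real.sqrt_inv, ← Real.sqrt_mul (by positivity)]
  congr 1
  field_simp

lemma integral_exp_neg_mul_sq_norm_stdGaussian {c : ℝ} (hc : 0 < c) :
    ∫ x, Real.exp (-((c - 1) / 2) * ‖x‖ ^ 2) ∂stdGaussian E =
      c ^ (-(finrank ℝ E / 2) : ℝ) := by
  have sq_norm_sum (y : Fin (finrank ℝ E) → ℝ) :
      ‖∑ i, y i • stdOrthonormalBasis ℝ E i‖ ^ 2 = ∑ i, y i ^ 2 := by
    rw [← WithLp.ofLp_toLp 2 y, (stdOrthonormalBasis ℝ E).sum_repr_symm,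
      LinearIsometryEquiv.norm_map, EuclideanSpace.real_norm_sq_eq]
  rw [stdGaussian, integral_map (Measurable.aemeasurable (by fun_prop)) (by fun_prop)]
  simp_rw [sq_norm_sum, Finset.mul_sum, Real.exp_sum]
  rw [integral_fintype_prod_eq_pow (fun t ↦ Real.exp (-((c - 1) / 2) * t ^ 2)),
    integral_exp_neg_mul_sq_gaussianReal hc, Fintype.card_fin, ← Real.rpow_mul_natCast hc.le]
  ring_nf

lemma lintegral_exp_neg_mul_sq_norm_stdGaussian {c : ℝ} (hc : 0 < c) :
    ∫⁻ x, ENNReal.ofReal (Real.exp (-((c - 1) / 2) * ‖x‖ ^ 2)) ∂stdGaussian E =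
      ENNReal.ofReal (c ^ (-(finrank ℝ E / 2) : ℝ)) := by
  have integral_eq := integral_exp_neg_mul_sq_norm_stdGaussian (E := E) hc
  have integral_ne_zero : ∫ x, Real.exp (-((c - 1) / 2) * ‖x‖ ^ 2) ∂stdGaussian E ≠ 0 := by
    rw [integral_eq]
    positivity
  rw [← integral_eq, ofReal_integral_eq_lintegral_ofReal
    (not_imp_comm.1 integral_undef integral_ne_zero) (ae_of_all _ fun x ↦ by positivity)]

lemma lintegral_Ioi_one_exp_neg_mul {a : ℝ} (ha : 0 < a) :
    ∫⁻ c in Set.Ioi (1 : ℝ), ENNReal.ofReal (Real.exp (-((c - 1) / 2) * a)) =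
      ENNReal.ofReal (2 / a) := by
  have exp_split (c : ℝ) : Real.exp (-((c - 1) / 2) * a) =
      Real.exp (a / 2) * Real.exp (-(a / 2) * c) := by
    rw [← Real.exp_add]; ring_nf
  simp_rw [exp_split]
  have hneg : -(a / 2) < 0 := by linarith
  rw [← ofReal_integral_eq_lintegral_ofReal ((integrableOn_exp_mul_Ioi hneg 1).const_mul _)
    (ae_of_all _ fun c ↦ by positivity), integral_const_mul, integral_exp_mul_Ioi hneg]
  congr 1
  rw [mul_one, mul_div_assoc', mul_neg, ← Real.exp_add]
  simp

lemma lintegral_inv_sq_norm_stdGaussian (hE : 2 < finrank ℝ E) :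
    ∫⁻ x, ENNReal.ofReal (‖x‖ ^ 2)⁻¹ ∂stdGaussian E =
      ENNReal.ofReal ((finrank ℝ E : ℝ) - 2)⁻¹ := by
  have : Nontrivial E := nontrivial_of_finrank_pos (R := ℝ) (by omega)
  have := nullSingletonClass_stdGaussian (E := E)
  have two_lt : (2 : ℝ) < finrank ℝ E := by exact_mod_cast hE
  have exponent_lt : (-(finrank ℝ E / 2) : ℝ) < -1 := by linarith
  have laplace : ∀ᵐ x ∂stdGaussian E, ENNReal.ofReal (‖x‖ ^ 2)⁻¹ = ENNReal.ofReal 2⁻¹ *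
      ∫⁻ c in Set.Ioi (1 : ℝ), ENNReal.ofReal (Real.exp (-((c - 1) / 2) * ‖x‖ ^ 2)) := by
    filter_upwards [Measure.ae_ne (stdGaussian E) 0] with x hx
    rw [lintegral_Ioi_one_exp_neg_mul (by positivity), ← ENNReal.ofReal_mul (by norm_num)]
    congr 1
    ring
  calc ∫⁻ x, ENNReal.ofReal (‖x‖ ^ 2)⁻¹ ∂stdGaussian E
    _ = ENNReal.ofReal 2⁻¹ * ∫⁻ c in Set.Ioi (1 : ℝ), ∫⁻ x,
          ENNReal.ofReal (Real.exp (-((c - 1) / 2) * ‖x‖ ^ 2)) ∂stdGaussian E := by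
      rw [lintegral_congr_ae laplace, lintegral_const_mul' _ _ ENNReal.ofReal_ne_top,
        lintegral_lintegral_swap (by fun_prop)]
    _ = ENNReal.ofReal 2⁻¹ * ∫⁻ c in Set.Ioi (1 : ℝ),
          ENNReal.ofReal (c ^ (-(finrank ℝ E / 2) : ℝ)) := by
      rw [setLIntegral_congr_fun measurableSet_Ioi fun c hc ↦
        lintegral_exp_neg_mul_sq_norm_stdGaussian (one_pos.trans hc)]
    _ = ENNReal.ofReal (2⁻¹ * ∫ c in Set.Ioi (1 : ℝ), c ^ (-(finrank ℝ E / 2) : ℝ)) := by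
      rw [ENNReal.ofReal_mul (by norm_num), ofReal_integral_eq_lintegral_ofReal
        (integrableOn_Ioi_rpow_of_lt exponent_lt one_pos)
        ((ae_restrict_mem measurableSet_Ioi).mono fun c hc ↦
          Real.rpow_nonneg (one_pos.trans hc).le _)]
    _ = ENNReal.ofReal ((finrank ℝ E : ℝ) - 2)⁻¹ := by
      rw [integral_Ioi_rpow_of_lt exponent_lt one_pos, Real.one_rpow,
        show -(finrank ℝ E / 2 : ℝ) + 1 = -((finrank ℝ E - 2) / 2) by ring]
      congr 1
      field

end Gaussian

section Gram

variable {ι E : Type*} [Fintype ι] [NormedAddCommGroup E] [InnerProductSpace ℝ E]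

lemma inv_gram_apply_self_nonneg [DecidableEq ι] (v : ι → E) (i : ι) : 0 ≤ (gram ℝ v)⁻¹ i i :=
  (posSemidef_gram ℝ v).inv.diag_nonneg

variable [FiniteDimensional ℝ E]

lemma finrank_orthogonal_span_image_compl {v : ι → E} {i : ι} (hv : LinearIndepOn ℝ v {i}ᶜ) :
    finrank ℝ (Submodule.span ℝ (v '' {i}ᶜ))ᗮ + Fintype.card ι = finrank ℝ E + 1 := by
  classical
  have finrank_span : finrank ℝ (Submodule.span ℝ (v '' {i}ᶜ)) + 1 = Fintype.card ι := by
    rw [Set.image_eq_range, finrank_span_eq_card hv, Fintype.card_compl_set, Set.card_singleton]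
    exact Nat.sub_add_cancel (Fintype.card_pos_iff.2 ⟨i⟩)
  have := (Submodule.span ℝ (v '' {i}ᶜ)).finrank_add_finrank_orthogonal
  omega

variable [DecidableEq ι]

lemma inv_gram_apply_self {v : ι → E} (hv : LinearIndependent ℝ v) (i : ι) :
    (gram ℝ v)⁻¹ i i =
      (‖(Submodule.span ℝ (v '' {i}ᶜ))ᗮ.orthogonalProjectionOnto (v i)‖ ^ 2)⁻¹ := by
  set U := Submodule.span ℝ (v '' {i}ᶜ) with hU
  set P := Uᗮ.orthogonalProjectionOnto
  set c : ι → ℝ := fun j ↦ (gram ℝ v)⁻¹ j i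
  set w := ∑ j, c j • v j with hw
  have isUnit_det : IsUnit (gram ℝ v).det :=
    isUnit_iff_ne_zero.2 (det_gram_ne_zero_iff_linearIndependent.2 hv)
  -- `w` lies in the span of `v` and pairs with the `v k` like the dual basis vector of `v i`.
  have inner_dual (k : ι) : inner ℝ (v k) w = if k = i then 1 else 0 := by
    rw [hw, inner_sum, ← one_apply, ← mul_nonsing_inv _ isUnit_det, mul_apply]
    exact Finset.sum_congr rfl fun j _ ↦ by rw [real_inner_smul_right, gram_apply, mul_comm]
  have dual_mem : w ∈ Uᗮ := by
    rw [← Submodule.span_singleton_le_iff_mem, Submodule.le_orthogonal_iff_le_orthogonal, hU,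
      Submodule.span_le]
    rintro _ ⟨k, hk, rfl⟩
    rw [SetLike.mem_coe, Submodule.mem_orthogonal_singleton_iff_inner_left, inner_dual,
      if_neg (by simpa using hk)]
  have proj_eq_zero {j : ι} (hj : j ≠ i) : P (v j) = 0 := by
    rw [Submodule.orthogonalProjectionOnto_eq_zero_iff]
    exact Submodule.le_orthogonal_orthogonal U (Submodule.subset_span ⟨j, hj, rfl⟩)
  have dual_eq : c i • P (v i) = P w := by
    rw [hw, map_sum, Finset.sum_eq_single i (fun j _ hj ↦ by simp [proj_eq_zero hj]) (by simp),
      map_smul]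
  have norm_sq : c i * ‖P (v i)‖ ^ 2 = 1 := by
    rw [← real_inner_self_eq_norm_sq, ← real_inner_smul_right, dual_eq,
      Submodule.orthogonalProjectionOnto_mem_subspace_eq_self ⟨w, dual_mem⟩,
      Submodule.inner_orthogonalProjectionOnto_eq_of_mem_right, inner_dual, if_pos rfl]
  exact eq_inv_of_mul_eq_one_left norm_sq

lemma inv_gram_update_apply_self {v : ι → E} {i : ι} (hv : LinearIndepOn ℝ v {i}ᶜ) {x : E}
    (hx : x ∉ Submodule.span ℝ (v '' {i}ᶜ)) :
    (gram ℝ (Function.update v i x))⁻¹ i i =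
      (‖(Submodule.span ℝ (v '' {i}ᶜ))ᗮ.orthogonalProjectionOnto x‖ ^ 2)⁻¹ := by
  rw [inv_gram_apply_self (linearIndependent_update_iff.2 ⟨hv, hx⟩),
    (eqOn_update_of_notMem (s := {i}ᶜ) (by simp)).image_eq, Function.update_self]

variable [MeasurableSpace E] [BorelSpace E]

lemma measurable_inv_gram_apply (i j : ι) :
    Measurable fun v : ι → E ↦ (gram ℝ v)⁻¹ i j := by
  have continuous_gram : Continuous fun v : ι → E ↦ gram ℝ v :=
    continuous_matrix fun k l ↦ by simp only [gram_apply]; fun_prop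
  simp only [inv_def, Ring.inverse_eq_inv', Matrix.smul_apply, smul_eq_mul]
  exact continuous_gram.matrix_det.measurable.inv.mul
    (continuous_gram.matrix_adjugate.matrix_elem i j).measurable

lemma lintegral_inv_gram_update_apply_self (hcard : Fintype.card ι + 2 ≤ finrank ℝ E)
    {v : ι → E} {i : ι} (hv : LinearIndepOn ℝ v {i}ᶜ) :
    ∫⁻ x, ENNReal.ofReal ((gram ℝ (Function.update v i x))⁻¹ i i) ∂stdGaussian E =
      ENNReal.ofReal ((finrank ℝ E : ℝ) - Fintype.card ι - 1)⁻¹ := by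
  set U := Submodule.span ℝ (v '' {i}ᶜ)
  have finrank_orthogonal : finrank ℝ Uᗮ + Fintype.card ι = finrank ℝ E + 1 :=
    finrank_orthogonal_span_image_compl hv
  have ne_top : U ≠ ⊤ := by
    intro htop
    rw [htop, Submodule.top_orthogonal_eq_bot, finrank_bot] at finrank_orthogonal
    omega
  have inv_gram_eq : ∀ᵐ x ∂stdGaussian E, (gram ℝ (Function.update v i x))⁻¹ i i =
      (‖Uᗮ.orthogonalProjectionOnto x‖ ^ 2)⁻¹ := by
    filter_upwards [measure_eq_zero_iff_ae_notMem.1 (stdGaussian_submodule_eq_zero ne_top)]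
      with x hx using inv_gram_update_apply_self hv hx
  calc ∫⁻ x, ENNReal.ofReal ((gram ℝ (Function.update v i x))⁻¹ i i) ∂stdGaussian E
    _ = ∫⁻ x, ENNReal.ofReal (‖Uᗮ.orthogonalProjectionOnto x‖ ^ 2)⁻¹ ∂stdGaussian E :=
      lintegral_congr_ae (inv_gram_eq.mono fun x hx ↦ congrArg ENNReal.ofReal hx)
    _ = ∫⁻ y, ENNReal.ofReal (‖y‖ ^ 2)⁻¹ ∂stdGaussian Uᗮ :=
      (measurePreserving_orthogonalProjectionOnto_stdGaussian Uᗮ).lintegral_comp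
        (f := fun y ↦ ENNReal.ofReal (‖y‖ ^ 2)⁻¹) (by fun_prop)
    _ = ENNReal.ofReal ((finrank ℝ E : ℝ) - Fintype.card ι - 1)⁻¹ := by
      rw [lintegral_inv_sq_norm_stdGaussian (by omega)]
      congr 2
      have : (finrank ℝ Uᗮ : ℝ) + Fintype.card ι = finrank ℝ E + 1 := mod_cast finrank_orthogonal
      linarith

lemma lintegral_inv_gram_apply_self (hcard : Fintype.card ι + 2 ≤ finrank ℝ E) (i : ι) :
    ∫⁻ v, ENNReal.ofReal ((gram ℝ v)⁻¹ i i) ∂Measure.pi (fun _ : ι ↦ stdGaussian E) =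
      ENNReal.ofReal ((finrank ℝ E : ℝ) - Fintype.card ι - 1)⁻¹ := by
  have ae_linearIndependent :=
    ae_linearIndependent_pi (fun _ : ι ↦ stdGaussian E)
      (fun _ _ hU ↦ stdGaussian_submodule_eq_zero hU) (by omega)
  have inner_integral := ae_linearIndependent.mono fun v hv ↦
    lintegral_inv_gram_update_apply_self hcard (hv.linearIndepOn {i}ᶜ)
  rw [lintegral_pi_eq_lintegral_lintegral_update _ i (measurable_inv_gram_apply i i).ennreal_ofReal,
    lintegral_congr_ae inner_integral, lintegral_const, measure_univ, mul_one]

lemma integrable_inv_gram_apply_self (hcard : Fintype.card ι + 2 ≤ finrank ℝ E) (i : ι) :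
    Integrable (fun v ↦ (gram ℝ v)⁻¹ i i) (Measure.pi fun _ : ι ↦ stdGaussian E) := by
  rw [← lintegral_ofReal_ne_top_iff_integrable
    (measurable_inv_gram_apply i i).aestronglyMeasurable
    (ae_of_all _ fun v ↦ inv_gram_apply_self_nonneg v i), lintegral_inv_gram_apply_self hcard]
  exact ENNReal.ofReal_ne_top

lemma integral_inv_gram_apply_self (hcard : Fintype.card ι + 2 ≤ finrank ℝ E) (i : ι) :
    ∫ v, (gram ℝ v)⁻¹ i i ∂Measure.pi (fun _ : ι ↦ stdGaussian E) =
      ((finrank ℝ E : ℝ) - Fintype.card ι - 1)⁻¹ := by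
  have hcard' : (Fintype.card ι : ℝ) + 2 ≤ finrank ℝ E := mod_cast hcard
  rw [integral_eq_lintegral_of_nonneg_ae (ae_of_all _ fun v ↦ inv_gram_apply_self_nonneg v i)
    (measurable_inv_gram_apply i i).aestronglyMeasurable, lintegral_inv_gram_apply_self hcard,
    ENNReal.toReal_ofReal (inv_nonneg.2 (by linarith))]

lemma integral_trace_inv_gram (hcard : Fintype.card ι + 2 ≤ finrank ℝ E) :
    ∫ v, (gram ℝ v)⁻¹.trace ∂Measure.pi (fun _ : ι ↦ stdGaussian E) =
      Fintype.card ι / ((finrank ℝ E : ℝ) - Fintype.card ι - 1) := by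
  simp only [trace, diag_apply]
  rw [integral_finsetSum _ fun i _ ↦ integrable_inv_gram_apply_self hcard i]
  simp only [integral_inv_gram_apply_self hcard, Finset.sum_const, Finset.card_univ,
    nsmul_eq_mul, div_eq_mul_inv]

end Gram

section GaussianMatrix

variable {m n : Type*} [Fintype n]

lemma mul_transpose_eq_gram (G : Matrix m n ℝ) :
    G * Gᵀ = gram ℝ fun i ↦ WithLp.toLp 2 (G i) := by
  ext i j
  simp [mul_apply, gram_apply, PiLp.inner_apply, mul_comm]

variable [Fintype m]

lemma sq_frobNorm_pinvRow [DecidableEq m] (G : Matrix m n ℝ) :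
    frobNorm (pinvRow G) ^ 2 = (G * Gᵀ)⁻¹.trace := by
  have sq_frobNorm : frobNorm (pinvRow G) ^ 2 = ((pinvRow G)ᵀ * pinvRow G).trace := by
    rw [frobNorm, Real.sq_sqrt (by positivity), Finset.sum_comm]
    simp only [trace, mul_apply, diag_apply, transpose_apply, sq]
  rw [sq_frobNorm, pinvRow]
  by_cases hG : IsUnit (G * Gᵀ).det
  · rw [transpose_mul, transpose_transpose, Matrix.mul_assoc, ← Matrix.mul_assoc G,
      mul_nonsing_inv _ hG, Matrix.mul_one, trace_transpose]
  · simp [nonsing_inv_apply_not_isUnit _ hG]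

lemma measurePreserving_toLp_stdGaussianMatrix :
    MeasurePreserving (fun (G : Matrix m n ℝ) i ↦ WithLp.toLp 2 (G i)) (stdGaussianMatrix m n)
      (Measure.pi fun _ : m ↦ stdGaussian (EuclideanSpace ℝ n)) :=
  measurePreserving_pi _ _ fun _ ↦ ⟨by fun_prop, map_pi_eq_stdGaussian⟩

theorem expected_sq_frobNorm_pinv_gaussian_general [DecidableEq m]
    (hcard : Fintype.card m + 2 ≤ Fintype.card n) :
    ∫ G, frobNorm (pinvRow G) ^ 2 ∂stdGaussianMatrix m n =
      Fintype.card m / ((Fintype.card n : ℝ) - Fintype.card m - 1) := by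
  simp_rw [sq_frobNorm_pinvRow, mul_transpose_eq_gram]
  have measurable_trace : Measurable fun v : m → EuclideanSpace ℝ n ↦ (gram ℝ v)⁻¹.trace :=
    Finset.measurable_sum _ fun i _ ↦ measurable_inv_gram_apply i i
  have hmp := measurePreserving_toLp_stdGaussianMatrix (m := m) (n := n)
  rw [← integral_map (f := fun v ↦ (gram ℝ v)⁻¹.trace) hmp.aemeasurable
    measurable_trace.aestronglyMeasurable, hmp.map_eq, integral_trace_inv_gram (by simpa),
    finrank_euclideanSpace]

end GaussianMatrix

/-- `E‖G†‖_F² = r/(p−1)` for an `r×(r+p)` standard Gaussian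
matrix `G` with `p ≥ 2`. -/
theorem expected_sq_frobNorm_pinv_gaussian {r p : ℕ} (hp : 2 ≤ p) :
    ∫ G, frobNorm (pinvRow G) ^ 2
        ∂(stdGaussianMatrix (Fin r) (Fin (r + p))) = (r : ℝ) / ((p : ℝ) - 1) := by
  convert expected_sq_frobNorm_pinv_gaussian_general (m := Fin r) (n := Fin (r + p)) (by simpa)
    using 1
  simp
end

section
/- Let G be an r×(r+p) standard Gaussian random matrix with p ≥ 2, and let G† = Gᵀ(GGᵀ)⁻¹ denote its Moore–Penrose pseudoinverse (GGᵀ is invertible almost surely; on the null event where it is singular, (GGᵀ)⁻¹ is interpreted as 0). Then E‖G†‖ ≤ e√(r+p)/p, where ‖·‖ is the spectral norm. -/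
open Matrix MeasureTheory ProbabilityTheory

/-!
Bounding the `p`-th moment of `‖G†‖` suffices. For fixed `T` and a standard Gaussian vector `x`,
looking only along the direction of the largest singular value gives `‖T‖ᵖ E|N(0,1)|ᵖ ≤ E‖T x‖ᵖ`.
With `T = G†` and `x` independent of `G`, Fubini lets us average over `G` first, at fixed `x`; by
rotation invariance `‖G† x‖` is distributed as `‖x‖ ‖G† eᵢ‖`. The vector `G† eᵢ` is dual to the rows
of `G`, so its norm is the reciprocal of the distance from row `i` to the span of the others, a chi
variable with at least `p + 1` degrees of freedom. Since the `-p`-th moment of a chi variable with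
`p + 1` degrees of freedom is exactly `1 / E|N(0,1)|ᵖ`, `E‖G†‖ᵖ · (E|N(0,1)|ᵖ)² ≤ E‖x‖ᵖ`, and both
Gaussian moments are controlled by `Γ`-function estimates.
-/

open Set Module
open scoped ENNReal RealInnerProductSpace

lemma convexOn_increment_mono {𝕜 : Type*} [Field 𝕜] [LinearOrder 𝕜] [IsStrictOrderedRing 𝕜]
    {s : Set 𝕜} {f : 𝕜 → 𝕜} (hf : ConvexOn 𝕜 s f) {x y a : 𝕜}
    (hx : x ∈ s) (hya : y + a ∈ s) (hxy : x ≤ y) (ha : 0 ≤ a) :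
    f (x + a) - f x ≤ f (y + a) - f y := by
  rcases ha.eq_or_lt with rfl | ha
  · simp
  have mem {z : 𝕜} (hxz : x ≤ z) (hzya : z ≤ y + a) : z ∈ s :=
    hf.1.ordConnected.out hx hya ⟨hxz, hzya⟩
  have from_x := hf.secant_mono hx (mem (by linarith : x ≤ x + a) (by linarith)) hya
    (by linarith) (by linarith) (by linarith : x + a ≤ y + a)
  have to_ya := hf.secant_mono hya hx (mem hxy (by linarith)) (by linarith) (by linarith) hxy
  rw [← neg_sub (f (y + a)), ← neg_sub (f (y + a)), ← neg_sub (y + a), ← neg_sub (y + a),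
    neg_div_neg_eq, neg_div_neg_eq] at to_ya
  have key := from_x.trans to_ya
  rwa [add_sub_cancel_left, add_sub_cancel_left, div_le_div_iff_of_pos_right ha] at key

lemma Gamma_add_le_Gamma_mul_rpow {x a : ℝ} (hx : 0 < x) (ha : 0 ≤ a) :
    Real.Gamma (x + a) ≤ Real.Gamma x * (x + a) ^ a := by
  rcases ha.eq_or_lt with rfl | ha
  · simp
  have hxa : 0 < x + a := by positivity
  have hΓx := Real.Gamma_pos_of_pos hx
  have hΓxa := Real.Gamma_pos_of_pos hxa
  have slopes := Real.convexOn_log_Gamma.slope_mono_adjacent (x := x) (y := x + a)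
    (z := x + a + 1) hx (mem_Ioi.2 (by positivity)) (by linarith) (by linarith)
  simp only [Function.comp_apply, Real.Gamma_add_one hxa.ne', Real.log_mul hxa.ne' hΓxa.ne',
    add_sub_cancel_left, add_sub_cancel_right, div_one] at slopes
  rw [div_le_iff₀ ha] at slopes
  rw [← Real.log_le_log_iff hΓxa (by positivity), Real.log_mul hΓx.ne' (by positivity),
    Real.log_rpow hxa]
  linarith

lemma Gamma_add_mul_Gamma_le {x y a : ℝ} (hx : 0 < x) (hxy : x ≤ y) (ha : 0 ≤ a) :
    Real.Gamma (x + a) * Real.Gamma y ≤ Real.Gamma x * Real.Gamma (y + a) := by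
  have hΓ {z : ℝ} (hz : x ≤ z) : 0 < Real.Gamma z := Real.Gamma_pos_of_pos (by linarith)
  have hxa := hΓ (by linarith : x ≤ x + a)
  have hya := hΓ (by linarith : x ≤ y + a)
  have increments := convexOn_increment_mono Real.convexOn_log_Gamma (mem_Ioi.2 hx)
    (mem_Ioi.2 (by linarith)) hxy ha
  simp only [Function.comp_apply] at increments
  rw [← Real.log_le_log_iff (mul_pos hxa (hΓ hxy)) (mul_pos (hΓ le_rfl) hya),
    Real.log_mul hxa.ne' (hΓ hxy).ne', Real.log_mul (hΓ le_rfl).ne' hya.ne']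
  linarith

/-- The moment of order `s` of the Euclidean norm of a standard Gaussian vector in dimension `d`
(a chi variable with `d` degrees of freedom), given by its closed form for real `d` and `s`. -/
noncomputable def chiMoment (d s : ℝ) : ℝ :=
  2 ^ (s / 2) * Real.Gamma ((d + s) / 2) / Real.Gamma (d / 2)

lemma chiMoment_pos {d s : ℝ} (hd : 0 < d) (hds : 0 < d + s) : 0 < chiMoment d s := by
  exact div_pos (mul_pos (by positivity) (Real.Gamma_pos_of_pos (half_pos hds)))
    (Real.Gamma_pos_of_pos (half_pos hd))

lemma chiMoment_le_sqrt_rpow {d s : ℝ} (hd : 0 < d) (hs : 0 ≤ s) :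
    chiMoment d s ≤ √(d + s) ^ s := by
  have hΓ := Real.Gamma_pos_of_pos (half_pos hd)
  rw [chiMoment, div_le_iff₀ hΓ, add_div]
  calc 2 ^ (s / 2) * Real.Gamma (d / 2 + s / 2)
      ≤ 2 ^ (s / 2) * (Real.Gamma (d / 2) * (d / 2 + s / 2) ^ (s / 2)) := by
        gcongr
        exact Gamma_add_le_Gamma_mul_rpow (half_pos hd) (by positivity)
    _ = (2 * (d / 2 + s / 2)) ^ (s / 2) * Real.Gamma (d / 2) := by
        rw [Real.mul_rpow (by norm_num) (by positivity)]; ring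
    _ = √(d + s) ^ s * Real.Gamma (d / 2) := by
        rw [Real.sqrt_eq_rpow, ← Real.rpow_mul (by positivity)]
        ring_nf

lemma chiMoment_neg_le_chiMoment_neg {d d' s : ℝ} (hs : 0 ≤ s) (hsd : s < d) (hdd' : d ≤ d') :
    chiMoment d' (-s) ≤ chiMoment d (-s) := by
  have key := Gamma_add_mul_Gamma_le (x := (d - s) / 2) (y := (d' - s) / 2) (a := s / 2)
    (by linarith) (by linarith) (by linarith)
  rw [← add_div, ← add_div, sub_add_cancel, sub_add_cancel] at key
  have hΓd := Real.Gamma_pos_of_pos (s := d / 2) (by linarith)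
  have hΓd' := Real.Gamma_pos_of_pos (s := d' / 2) (by linarith)
  simp only [chiMoment, ← sub_eq_add_neg]
  rw [div_le_div_iff₀ hΓd' hΓd, mul_assoc, mul_assoc]
  gcongr ?_ * ?_
  linarith

lemma chiMoment_add_one_neg {s : ℝ} (hs : 0 ≤ s) :
    chiMoment (s + 1) (-s) = (chiMoment 1 s)⁻¹ := by
  have : 0 < Real.Gamma ((s + 1) / 2) := Real.Gamma_pos_of_pos (by linarith)
  rw [chiMoment, chiMoment, add_neg_cancel_comm, neg_div, Real.rpow_neg (by norm_num),
    add_comm 1 s]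
  field_simp

lemma div_exp_pow_le_chiMoment_one_sq (p : ℕ) :
    (p / Real.exp 1) ^ p ≤ chiMoment 1 p ^ 2 := by
  rcases p.eq_zero_or_pos with rfl | hp
  · simp [chiMoment, (Real.Gamma_pos_of_pos (s := 2⁻¹) (by norm_num)).ne']
  have hp1 : (1 : ℝ) ≤ p := by exact_mod_cast hp
  set Γ := Real.Gamma ((1 + p) / 2) with hΓdef
  have : 0 < Γ := Real.Gamma_pos_of_pos (by positivity)
  have moment_sq : chiMoment 1 p ^ 2 = 2 ^ p * Γ ^ 2 / Real.pi := by
    rw [chiMoment, Real.Gamma_one_half_eq, div_pow, mul_pow, Real.sq_sqrt Real.pi_pos.le,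
      ← Real.rpow_mul_natCast (by norm_num), Nat.cast_two, div_mul_cancel₀ _ two_ne_zero,
      Real.rpow_natCast]
  -- Legendre's formula turns `Γ((1 + p) / 2) Γ(1 + p / 2)` into `p!`, which Stirling bounds below.
  have duplication : p.factorial * √Real.pi = 2 ^ p * (Γ * Real.Gamma ((1 + p) / 2 + 1 / 2)) := by
    have two_mul_half : 2 * ((1 + (p : ℝ)) / 2) = p + 1 := by ring
    rw [hΓdef, Real.Gamma_mul_Gamma_add_half, two_mul_half, Real.Gamma_nat_eq_factorial,
      sub_add_cancel_right, Real.rpow_neg (by norm_num), Real.rpow_natCast]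
    field_simp
  set c := √((1 + p) / 2 + 1 / 2) with hc
  have hc0 : 0 < c := Real.sqrt_pos.2 (by positivity)
  rw [moment_sq, le_div_iff₀ Real.pi_pos, ← mul_le_mul_iff_left₀ hc0]
  calc (p / Real.exp 1) ^ p * Real.pi * c
      = √Real.pi * (√(Real.pi * ((1 + p) / 2 + 1 / 2)) * (p / Real.exp 1) ^ p) := by
        rw [Real.sqrt_mul Real.pi_pos.le]
        linear_combination -(p / Real.exp 1) ^ p * c * Real.mul_self_sqrt Real.pi_pos.le
    _ ≤ √Real.pi * (√(2 * Real.pi * p) * (p / Real.exp 1) ^ p) := by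
        gcongr √Real.pi * (√?_ * _)
        nlinarith [Real.pi_pos]
    _ ≤ √Real.pi * p.factorial := by
        gcongr
        exact Stirling.le_factorial_stirling p
    _ = 2 ^ p * (Γ * Real.Gamma ((1 + p) / 2 + 1 / 2)) := by rw [mul_comm, duplication]
    _ ≤ 2 ^ p * (Γ * (Γ * c)) := by
        gcongr
        rw [hc, Real.sqrt_eq_rpow]
        exact Gamma_add_le_Gamma_mul_rpow (by positivity) (by norm_num)
    _ = 2 ^ p * Γ ^ 2 * c := by ring

lemma exists_norm_le_one_norm_apply_eq_opNorm {E F : Type*} [NormedAddCommGroup E]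
    [NormedSpace ℝ E] [FiniteDimensional ℝ E] [NormedAddCommGroup F] [NormedSpace ℝ F]
    (T : E →L[ℝ] F) : ∃ x : E, ‖x‖ ≤ 1 ∧ ‖T x‖ = ‖T‖ := by
  have : ProperSpace E := FiniteDimensional.proper ℝ E
  obtain ⟨x, hx, hmax⟩ := (isCompact_closedBall (0 : E) 1).exists_sSup_image_eq
    (f := fun x ↦ ‖T x‖) ⟨0, by simp⟩ (by fun_prop)
  exact ⟨x, by simpa using hx, by rw [← hmax, T.sSup_unitClosedBall_eq_norm]⟩

lemma exists_norm_eq_one_norm_mul_abs_inner_le {E F : Type*}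
    [NormedAddCommGroup E] [InnerProductSpace ℝ E] [CompleteSpace E] [Nontrivial E]
    [NormedAddCommGroup F] [InnerProductSpace ℝ F] [FiniteDimensional ℝ F] (T : E →L[ℝ] F) :
    ∃ u : E, ‖u‖ = 1 ∧ ∀ x, ‖T‖ * ‖⟪u, x⟫‖ ≤ ‖T x‖ := by
  rcases eq_or_ne T 0 with rfl | hT
  · obtain ⟨u, hu⟩ := exists_norm_eq E zero_le_one
    exact ⟨u, hu, by simp⟩
  have hT' : ‖T‖ ≠ 0 := norm_ne_zero_iff.2 hT
  obtain ⟨w, hw, hTw⟩ := exists_norm_le_one_norm_apply_eq_opNorm (ContinuousLinearMap.adjoint T)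
  rw [LinearIsometryEquiv.norm_map] at hTw
  refine ⟨‖T‖⁻¹ • ContinuousLinearMap.adjoint T w,
    by rw [norm_smul, norm_inv, norm_norm, hTw, inv_mul_cancel₀ hT'], fun x ↦ ?_⟩
  calc ‖T‖ * ‖⟪‖T‖⁻¹ • ContinuousLinearMap.adjoint T w, x⟫‖ = ‖⟪w, T x⟫‖ := by
        rw [real_inner_smul_left, ContinuousLinearMap.adjoint_inner_left, norm_mul, norm_inv,
          norm_norm, mul_inv_cancel_left₀ hT']
    _ ≤ ‖w‖ * ‖T x‖ := norm_inner_le_norm w (T x)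
    _ ≤ ‖T x‖ := mul_le_of_le_one_left (norm_nonneg _) hw

lemma lintegral_rpow_mul_exp_neg_sq_div_two {q : ℝ} (hq : -1 < q) :
    ∫⁻ y in Ioi (0 : ℝ), ENNReal.ofReal (y ^ q * Real.exp (-y ^ 2 / 2)) =
      ENNReal.ofReal (2 ^ ((q - 1) / 2) * Real.Gamma ((q + 1) / 2)) := by
  have exponent (y : ℝ) : -y ^ 2 / 2 = -(1 / 2) * y ^ (2 : ℝ) := by rw [Real.rpow_two]; ring
  simp only [exponent]
  rw [← ofReal_integral_eq_lintegral_ofReal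
    (by simpa only [Real.rpow_two] using! integrableOn_rpow_mul_exp_neg_mul_sq one_half_pos hq)
    (ae_restrict_of_forall_mem measurableSet_Ioi fun y hy ↦
      mul_nonneg (Real.rpow_nonneg (le_of_lt hy) _) (Real.exp_nonneg _)),
    integral_rpow_mul_exp_neg_mul_rpow two_pos hq one_half_pos, one_div,
    Real.inv_rpow zero_le_two, ← Real.rpow_neg zero_le_two, ← Real.rpow_neg_one,
    ← Real.rpow_add two_pos]
  ring_nf

lemma lintegral_fun_norm_addHaar {E : Type*} [NormedAddCommGroup E] [NormedSpace ℝ E]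
    [FiniteDimensional ℝ E] [Nontrivial E] [MeasurableSpace E] [BorelSpace E] (μ : Measure E)
    [μ.IsAddHaarMeasure] {f : ℝ → ℝ≥0∞} (hf : Measurable f) :
    ∫⁻ x, f ‖x‖ ∂μ =
      μ.toSphere univ * ∫⁻ y in Ioi (0 : ℝ), ENNReal.ofReal (y ^ (finrank ℝ E - 1)) * f y := by
  calc ∫⁻ x, f ‖x‖ ∂μ
      = ∫⁻ x : ({0}ᶜ : Set E), f ‖x.1‖ ∂μ.comap (↑) := by
        rw [lintegral_subtype_comap (measurableSet_singleton _).compl fun x ↦ f ‖x‖,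
          restrict_compl_singleton]
    _ = ∫⁻ x, f x.2 ∂μ.toSphere.prod (.volumeIoiPow (finrank ℝ E - 1)) := by
        simpa using μ.measurePreserving_homeomorphUnitSphereProd.lintegral_comp
          (f := fun x ↦ f x.2) (by fun_prop)
    _ = μ.toSphere univ * ∫⁻ y : Ioi (0 : ℝ), f y ∂.volumeIoiPow (finrank ℝ E - 1) := by
        simpa using lintegral_prod_mul (μ := μ.toSphere)
          (ν := .volumeIoiPow (finrank ℝ E - 1)) (f := 1) (g := fun y ↦ f y)
          (by fun_prop) (by fun_prop)
    _ = _ := by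
        rw [Measure.volumeIoiPow, lintegral_withDensity_eq_lintegral_mul _ (by fun_prop)
          (by fun_prop), ← lintegral_subtype_comap measurableSet_Ioi]
        rfl

section Radial

variable {E : Type*} [NormedAddCommGroup E] [InnerProductSpace ℝ E] [FiniteDimensional ℝ E]
  [MeasurableSpace E] [BorelSpace E]

lemma stdGaussian_eq_withDensity : stdGaussian E = volume.withDensity fun x ↦
    ENNReal.ofReal ((2 * Real.pi) ^ (-(finrank ℝ E / 2 : ℝ)) * Real.exp (-‖x‖ ^ 2 / 2)) := by
  set c : ℝ := (2 * Real.pi) ^ (-(finrank ℝ E / 2 : ℝ)) with hc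
  have integrand (t x : E) : (ENNReal.ofReal (c * Real.exp (-‖x‖ ^ 2 / 2))).toReal •
      Complex.exp (⟪x, t⟫ * Complex.I) =
      c * Complex.exp (-(1 / 2) * ‖x‖ ^ 2 + Complex.I * ⟪t, x⟫) := by
    rw [ENNReal.toReal_ofReal (by positivity), Complex.exp_add, real_inner_comm, Complex.real_smul]
    push_cast
    ring_nf
  have integrable : Integrable fun x : E ↦ Real.exp (-(1 / 2) * ‖x‖ ^ 2) :=
    .of_integral_ne_zero <| by
      rw [GaussianFourier.integral_rexp_neg_mul_sq_norm one_half_pos]; positivity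
  have : IsFiniteMeasure (volume.withDensity fun x : E ↦
      ENNReal.ofReal (c * Real.exp (-‖x‖ ^ 2 / 2))) :=
    isFiniteMeasure_withDensity_ofReal <| Integrable.hasFiniteIntegral <| by
      convert integrable.const_mul c using 4
      ring
  refine Measure.ext_of_charFun (funext fun t ↦ ?_)
  rw [charFun_stdGaussian, charFun_apply, integral_withDensity_eq_integral_toReal_smul
    (by fun_prop) (.of_forall fun x ↦ ENNReal.ofReal_lt_top)]
  simp only [integrand]
  rw [integral_const_mul, GaussianFourier.integral_cexp_neg_mul_sq_norm_add (by norm_num),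
    ← mul_assoc]
  have normalization : (c : ℂ) * (Real.pi / (1 / 2)) ^ (finrank ℝ E / 2 : ℂ) = 1 := by
    have : (Real.pi / (1 / 2) : ℂ) = (2 * Real.pi : ℝ) := by push_cast; ring
    rw [this, hc, Real.rpow_neg (by positivity)]
    have h := Complex.ofReal_cpow (x := 2 * Real.pi) (by positivity) (finrank ℝ E / 2)
    push_cast at h ⊢
    rw [← h, inv_mul_cancel₀]
    norm_cast
    positivity
  rw [normalization, one_mul]
  congr 1
  rw [Complex.I_sq]
  ring

lemma exists_lintegral_enorm_rpow_stdGaussian_eq_mul [Nontrivial E] :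
    ∃ C : ℝ≥0∞, ∀ s : ℝ, 0 < finrank ℝ E + s → ∫⁻ x, ‖x‖ₑ ^ s ∂stdGaussian E =
      C * ENNReal.ofReal (2 ^ (s / 2) * Real.Gamma ((finrank ℝ E + s) / 2)) := by
  set d := finrank ℝ E
  have hd1 : 1 ≤ d := finrank_pos
  set c : ℝ := (2 * Real.pi) ^ (-(d / 2 : ℝ))
  refine ⟨(volume : Measure E).toSphere univ * ENNReal.ofReal (c * 2 ^ ((d - 2 : ℝ) / 2)),
    fun s hs ↦ ?_⟩
  have radial {y : ℝ} (hy : 0 < y) :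
      ENNReal.ofReal (y ^ (d - 1)) * (ENNReal.ofReal (c * Real.exp (-y ^ 2 / 2)) * ‖y‖ₑ ^ s) =
        ENNReal.ofReal c * ENNReal.ofReal (y ^ (d - 1 + s) * Real.exp (-y ^ 2 / 2)) := by
    rw [Real.enorm_of_nonneg hy.le, ENNReal.ofReal_rpow_of_pos hy,
      ← ENNReal.ofReal_mul (by positivity), ← ENNReal.ofReal_mul (by positivity),
      ← ENNReal.ofReal_mul (by positivity), Real.rpow_add hy, ← Nat.cast_pred hd1,
      Real.rpow_natCast]
    ring_nf
  rw [stdGaussian_eq_withDensity, lintegral_withDensity_eq_lintegral_mul _ (by fun_prop)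
    (by fun_prop)]
  calc ∫⁻ x : E, ENNReal.ofReal (c * Real.exp (-‖x‖ ^ 2 / 2)) * ‖x‖ₑ ^ s
      = ∫⁻ x : E, ENNReal.ofReal (c * Real.exp (-‖x‖ ^ 2 / 2)) * ‖‖x‖‖ₑ ^ s := by
        simp only [enorm_norm]
    _ = volume.toSphere univ * ∫⁻ y in Ioi (0 : ℝ),
          ENNReal.ofReal c * ENNReal.ofReal (y ^ (d - 1 + s) * Real.exp (-y ^ 2 / 2)) := by
        rw [lintegral_fun_norm_addHaar volume
          (f := fun y ↦ ENNReal.ofReal (c * Real.exp (-y ^ 2 / 2)) * ‖y‖ₑ ^ s) (by fun_prop),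
          setLIntegral_congr_fun measurableSet_Ioi fun y hy ↦ radial hy]
    _ = _ := by
        rw [lintegral_const_mul _ (by fun_prop),
          lintegral_rpow_mul_exp_neg_sq_div_two (by linarith), mul_assoc,
          ← ENNReal.ofReal_mul (by positivity), ← ENNReal.ofReal_mul (by positivity),
          mul_assoc c, ← mul_assoc (2 ^ _), ← Real.rpow_add two_pos]
        ring_nf

lemma lintegral_enorm_rpow_stdGaussian [Nontrivial E] {s : ℝ} (hs : 0 < finrank ℝ E + s) :
    ∫⁻ x, ‖x‖ₑ ^ s ∂stdGaussian E = ENNReal.ofReal (chiMoment (finrank ℝ E) s) := by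
  obtain ⟨C, hC⟩ := exists_lintegral_enorm_rpow_stdGaussian_eq_mul (E := E)
  have hΓ : 0 < Real.Gamma (finrank ℝ E / 2) :=
    Real.Gamma_pos_of_pos (by have := finrank_pos (R := ℝ) (M := E); positivity)
  have mass : C * ENNReal.ofReal (Real.Gamma (finrank ℝ E / 2)) = 1 := by
    simpa [finrank_pos] using (hC 0 (by simp [finrank_pos])).symm
  rw [hC s hs, ENNReal.eq_inv_of_mul_eq_one_left mass, ← ENNReal.ofReal_inv_of_pos hΓ,
    ← ENNReal.ofReal_mul (by positivity), chiMoment, inv_mul_eq_div]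

lemma stdGaussian_map_adjoint {F : Type*} [NormedAddCommGroup F] [InnerProductSpace ℝ F]
    [FiniteDimensional ℝ F] [MeasurableSpace F] [BorelSpace F] (S : F →ₗᵢ[ℝ] E) :
    (stdGaussian E).map (ContinuousLinearMap.adjoint S.toContinuousLinearMap) = stdGaussian F := by
  refine Measure.ext_of_charFun (funext fun t ↦ ?_)
  rw [charFun_stdGaussian, charFun_apply, integral_map (by fun_prop) (by fun_prop)]
  simp only [ContinuousLinearMap.adjoint_inner_left]
  rw [← charFun_apply, charFun_stdGaussian, S.coe_toContinuousLinearMap, S.norm_map]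

lemma lintegral_enorm_inner_rpow_stdGaussian {u : E} (hu : ‖u‖ = 1) {s : ℝ} (hs : -1 < s) :
    ∫⁻ x, ‖⟪u, x⟫‖ₑ ^ s ∂stdGaussian E = ENNReal.ofReal (chiMoment 1 s) := by
  let S : ℝ →ₗᵢ[ℝ] E := LinearIsometry.toSpanSingleton ℝ E hu
  have S_eq : S.toContinuousLinearMap = ContinuousLinearMap.toSpanSingleton ℝ u := rfl
  have moment := lintegral_enorm_rpow_stdGaussian (E := ℝ) (s := s) (by simp; linarith)
  rw [← stdGaussian_map_adjoint S, S_eq, ContinuousLinearMap.adjoint_toSpanSingleton,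
    lintegral_map (by fun_prop) (by fun_prop)] at moment
  simpa using moment

lemma lintegral_enorm_orthogonalProjection_rpow_stdGaussian (K : Submodule ℝ E) [Nontrivial K]
    {s : ℝ} (hs : 0 < finrank ℝ K + s) :
    ∫⁻ x, ‖K.orthogonalProjectionOnto x‖ₑ ^ s ∂stdGaussian E =
      ENNReal.ofReal (chiMoment (finrank ℝ K) s) := by
  have adjoint_eq : ContinuousLinearMap.adjoint K.subtypeₗᵢ.toContinuousLinearMap =
      K.orthogonalProjectionOnto := K.adjoint_subtypeL
  rw [← lintegral_enorm_rpow_stdGaussian hs, ← stdGaussian_map_adjoint K.subtypeₗᵢ, adjoint_eq,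
    lintegral_map (by fun_prop) (by fun_prop)]

end Radial

lemma enorm_rpow_mul_chiMoment_le {E F : Type*} [NormedAddCommGroup E] [InnerProductSpace ℝ E]
    [FiniteDimensional ℝ E] [Nontrivial E] [MeasurableSpace E] [BorelSpace E]
    [NormedAddCommGroup F] [InnerProductSpace ℝ F] [FiniteDimensional ℝ F]
    (T : E →L[ℝ] F) {s : ℝ} (hs : 0 ≤ s) :
    ‖T‖ₑ ^ s * ENNReal.ofReal (chiMoment 1 s) ≤ ∫⁻ x, ‖T x‖ₑ ^ s ∂stdGaussian E := by
  obtain ⟨u, hu, hT⟩ := exists_norm_eq_one_norm_mul_abs_inner_le T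
  rw [← lintegral_enorm_inner_rpow_stdGaussian hu (by linarith),
    ← lintegral_const_mul _ (by fun_prop)]
  gcongr with x
  rw [← ENNReal.mul_rpow_of_nonneg _ _ hs]
  gcongr
  rw [← ofReal_norm, ← ofReal_norm, ← ofReal_norm, ← ENNReal.ofReal_mul (norm_nonneg T)]
  exact ENNReal.ofReal_le_ofReal (hT x)

lemma lintegral_update {ι : Type*} [Fintype ι] [DecidableEq ι] {X : ι → Type*}
    [∀ i, MeasurableSpace (X i)] (μ : ∀ i, Measure (X i)) [∀ i, IsProbabilityMeasure (μ i)]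
    {f : (∀ i, X i) → ℝ≥0∞} (hf : Measurable f) (i : ι) :
    ∫⁻ x, ∫⁻ y, f (Function.update x i y) ∂μ i ∂Measure.pi μ = ∫⁻ x, f x ∂Measure.pi μ := by
  simp only [← lmarginal_singleton]
  refine lintegral_eq_of_lmarginal_eq {i} (hf.lmarginal μ) hf ?_
  ext x
  rw [lmarginal_singleton]
  simp [lmarginal_update_of_mem]

lemma norm_mul_norm_orthogonalProjection_eq_one_of_dual {ι E : Type*} [NormedAddCommGroup E]
    [InnerProductSpace ℝ E] [FiniteDimensional ℝ E] {a : ι → E} {i : ι} {y : E}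
    (hy : y ∈ Submodule.span ℝ (range a)) (hi : ⟪a i, y⟫ = 1) (hj : ∀ j ≠ i, ⟪a j, y⟫ = 0) :
    ‖y‖ * ‖(Submodule.span ℝ (a '' {i}ᶜ))ᗮ.orthogonalProjectionOnto (a i)‖ = 1 := by
  set V := Submodule.span ℝ (a '' {i}ᶜ)
  have hyV : y ∈ Vᗮ := by
    rw [Submodule.mem_orthogonal]
    intro u hu
    induction hu using Submodule.span_induction with
    | mem u hu => obtain ⟨j, hji, rfl⟩ := hu; exact hj j hji
    | zero => exact inner_zero_left y
    | add u v _ _ hu hv => rw [inner_add_left, hu, hv, add_zero]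
    | smul c u _ hu => rw [real_inner_smul_left, hu, mul_zero]
  obtain ⟨c, z, hz, hyz⟩ : ∃ c : ℝ, ∃ z ∈ V, y = c • a i + z := by
    rwa [← insert_image_compl_eq_range a i, Submodule.mem_span_insert] at hy
  let w := Vᗮ.orthogonalProjectionOnto (a i)
  have y_eq : (⟨y, hyV⟩ : Vᗮ) = c • w := by
    rw [← Vᗮ.orthogonalProjectionOnto_mem_subspace_eq_self ⟨y, hyV⟩]
    simp only [hyz, map_add, map_smul, w,
      Submodule.orthogonalProjectionOnto_orthogonal_apply_eq_zero hz, add_zero]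
  have norm_y : ‖y‖ = |c| * ‖w‖ := by
    rw [← Real.norm_eq_abs, ← norm_smul, ← y_eq, Submodule.coe_norm]
  have inner_eq : c * ‖w‖ ^ 2 = 1 := by
    rw [← real_inner_self_eq_norm_sq, ← real_inner_smul_right, ← y_eq,
      Submodule.inner_orthogonalProjectionOnto_eq_of_mem_right, hi]
  rw [norm_y, mul_assoc, ← pow_two, ← abs_of_nonneg (sq_nonneg ‖w‖), ← abs_mul, inner_eq, abs_one]

/-- The orthogonal complement of the span of all rows of `G` but the `i`-th; the distance from row
`i` to the span of the others is the norm of its projection onto this space. -/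
noncomputable def otherRowsPerp {m n : Type*} [Fintype n] (G : Matrix m n ℝ) (i : m) :
    Submodule ℝ (EuclideanSpace ℝ n) :=
  (Submodule.span ℝ ((fun j ↦ WithLp.toLp 2 (G j)) '' {i}ᶜ))ᗮ

section Rows

lemma otherRowsPerp_updateRow {m n : Type*} [Fintype n] [DecidableEq m] (G : Matrix m n ℝ) (i : m)
    (y : n → ℝ) : otherRowsPerp (G.updateRow i y) i = otherRowsPerp G i := by
  have rows_eq : EqOn (fun j ↦ WithLp.toLp 2 (G.updateRow i y j)) (fun j ↦ WithLp.toLp 2 (G j))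
      {i}ᶜ := fun j hj ↦ by simp only [updateRow_ne hj]
  rw [otherRowsPerp, rows_eq.image_eq, otherRowsPerp]

variable {m n : Type*} [Fintype m] [Fintype n]

lemma card_succ_le_card_add_finrank_otherRowsPerp (G : Matrix m n ℝ) (i : m) :
    Fintype.card n + 1 ≤ Fintype.card m + finrank ℝ (otherRowsPerp G i) := by
  classical
  let others : Submodule ℝ (EuclideanSpace ℝ n) :=
    Submodule.span ℝ ((fun j ↦ WithLp.toLp 2 (G j)) '' {i}ᶜ)
  have finrank_others : finrank ℝ others ≤ Fintype.card m - 1 := by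
    unfold others
    rw [image_eq_range]
    refine (finrank_range_le_card _).trans_eq ?_
    rw [Fintype.card_compl_set, card_singleton]
  have total : finrank ℝ others + finrank ℝ (otherRowsPerp G i) = Fintype.card n := by
    rw [← finrank_euclideanSpace (𝕜 := ℝ)]
    exact others.finrank_add_finrank_orthogonal
  have card_pos : 0 < Fintype.card m := Fintype.card_pos_iff.2 ⟨i⟩
  omega

variable [DecidableEq m]

lemma mul_pinvRow {G : Matrix m n ℝ} (hG : IsUnit (G * Gᵀ).det) : G * pinvRow G = 1 := by
  rw [pinvRow, ← Matrix.mul_assoc, mul_nonsing_inv _ hG]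

lemma pinvRow_mul_mul_of_isUnit_det {Q : Matrix m m ℝ} (hQ : IsUnit Q.det) (G : Matrix m n ℝ) :
    pinvRow (Q * G) * Q = pinvRow G := by
  calc (Q * G)ᵀ * (Q * G * (Q * G)ᵀ)⁻¹ * Q
      = Gᵀ * Qᵀ * (Q * (G * Gᵀ) * Qᵀ)⁻¹ * Q := by simp only [transpose_mul, Matrix.mul_assoc]
    _ = Gᵀ * (Qᵀ * Qᵀ⁻¹) * (G * Gᵀ)⁻¹ * (Q⁻¹ * Q) := by
        rw [Matrix.mul_inv_rev, Matrix.mul_inv_rev]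
        simp only [Matrix.mul_assoc]
    _ = pinvRow G := by
        rw [mul_nonsing_inv _ (isUnit_det_transpose Q hQ), nonsing_inv_mul _ hQ, Matrix.mul_one,
          Matrix.mul_one, pinvRow]

lemma pinvRow_apply_mem_span_rows (G : Matrix m n ℝ) (x : EuclideanSpace ℝ m) :
    toEuclideanLin (pinvRow G) x ∈ Submodule.span ℝ (range fun j ↦ WithLp.toLp 2 (G j)) := by
  have combination : toEuclideanLin (pinvRow G) x =
      ∑ j, ((G * Gᵀ)⁻¹ *ᵥ x.ofLp) j • WithLp.toLp 2 (G j) := by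
    ext k
    rw [pinvRow, toLpLin_apply, ← mulVec_mulVec]
    simp [mulVec, dotProduct, mul_comm]
  rw [combination]
  exact Submodule.sum_smul_mem _ _ fun j _ ↦ Submodule.subset_span (mem_range_self j)

lemma inner_row_toEuclideanLin_single (G : Matrix m n ℝ) (A : Matrix n m ℝ) (i j : m) :
    ⟪WithLp.toLp 2 (G j), toEuclideanLin A (EuclideanSpace.single i 1)⟫ = (G * A) j i := by
  simp [PiLp.inner_apply, toLpLin_apply, mul_apply, mul_comm]

lemma enorm_pinvRow_single_le (G : Matrix m n ℝ) (i : m) :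
    ‖toEuclideanLin (pinvRow G) (EuclideanSpace.single i 1)‖ₑ ≤
      ‖(otherRowsPerp G i).orthogonalProjectionOnto (WithLp.toLp 2 (G i))‖ₑ⁻¹ := by
  by_cases hG : IsUnit (G * Gᵀ).det
  · have dual (j : m) : ⟪WithLp.toLp 2 (G j), toEuclideanLin (pinvRow G)
        (EuclideanSpace.single i 1)⟫ = (1 : Matrix m m ℝ) j i := by
      rw [inner_row_toEuclideanLin_single, mul_pinvRow hG]
    have norm_mul := norm_mul_norm_orthogonalProjection_eq_one_of_dual
      (pinvRow_apply_mem_span_rows G (EuclideanSpace.single i 1))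
      ((dual i).trans (one_apply_eq i)) fun j hj ↦ (dual j).trans (one_apply_ne hj)
    refine (ENNReal.eq_inv_of_mul_eq_one_left ?_).le
    rw [← ofReal_norm, ← ofReal_norm, ← ENNReal.ofReal_mul (norm_nonneg _)]
    exact (congrArg ENNReal.ofReal norm_mul).trans ENNReal.ofReal_one
  · simp [pinvRow, nonsing_inv_apply_not_isUnit _ hG]

end Rows

section Measurability

instance borelSpace_matrix {m n : Type*} [Countable m] [Countable n] : BorelSpace (Matrix m n ℝ) :=
  inferInstanceAs (BorelSpace (m → n → ℝ))

variable {m n : Type*} [Fintype m] [Fintype n]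

lemma measurable_pinvRow [DecidableEq m] : Measurable (pinvRow : Matrix m n ℝ → Matrix n m ℝ) := by
  have cramer (G : Matrix m n ℝ) :
      pinvRow G = (G * Gᵀ).det⁻¹ • (Gᵀ * (G * Gᵀ).adjugate) := by
    rw [pinvRow, inv_def, Ring.inverse_eq_inv', Matrix.mul_smul]
  have measurable_det : Measurable fun G : Matrix m n ℝ ↦ (G * Gᵀ).det :=
    Continuous.measurable (by fun_prop)
  have measurable_adjugate : Measurable fun G : Matrix m n ℝ ↦ Gᵀ * (G * Gᵀ).adjugate :=
    Continuous.measurable (by fun_prop)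
  simp only [funext cramer]
  exact measurable_det.inv.smul measurable_adjugate

lemma measurable_toEuclideanLin_pinvRow_apply [DecidableEq m] :
    Measurable fun z : Matrix m n ℝ × EuclideanSpace ℝ m ↦ toEuclideanLin (pinvRow z.1) z.2 := by
  have apply_measurable : Measurable fun z : Matrix n m ℝ × EuclideanSpace ℝ m ↦
      toEuclideanLin z.1 z.2 :=
    Continuous.measurable (by simp only [toLpLin_apply]; fun_prop)
  have pair : Measurable fun z : Matrix m n ℝ × EuclideanSpace ℝ m ↦ (pinvRow z.1, z.2) :=
    (measurable_pinvRow.comp measurable_fst).prodMk measurable_snd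
  have joint := apply_measurable.comp pair
  exact joint

lemma measurable_enorm_pinvRow_apply_rpow [DecidableEq m] (x : EuclideanSpace ℝ m) (s : ℝ) :
    Measurable fun G : Matrix m n ℝ ↦ ‖toEuclideanLin (pinvRow G) x‖ₑ ^ s :=
  measurable_toEuclideanLin_pinvRow_apply.of_uncurry_right.enorm.pow_const s

lemma continuous_specNorm [DecidableEq n] : Continuous (specNorm : Matrix m n ℝ → ℝ) := by
  let L := (toEuclideanLin (𝕜 := ℝ) (m := m) (n := n)).trans LinearMap.toContinuousLinearMap
  exact L.toLinearMap.continuous_of_finiteDimensional.norm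

lemma measurable_specNorm_pinvRow [DecidableEq m] :
    Measurable fun G : Matrix m n ℝ ↦ specNorm (pinvRow G) :=
  continuous_specNorm.measurable.comp measurable_pinvRow

end Measurability

section Invariance

variable {m n : Type*} [Fintype m] [Fintype n]

instance isProbabilityMeasure_stdGaussianMatrix : IsProbabilityMeasure (stdGaussianMatrix m n) :=
  inferInstanceAs (IsProbabilityMeasure (Measure.pi fun _ ↦ Measure.pi fun _ ↦ gaussianReal 0 1))

lemma measurePreserving_toLp_stdGaussian : MeasurePreserving (WithLp.toLp 2)
    (Measure.pi fun _ : m ↦ gaussianReal 0 1) (stdGaussian (EuclideanSpace ℝ m)) :=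
  ⟨by fun_prop, map_pi_eq_stdGaussian⟩

lemma measurePreserving_curry_stdGaussianMatrix : MeasurePreserving
    (MeasurableEquiv.curry m n ℝ) (Measure.pi fun _ ↦ gaussianReal 0 1)
    (stdGaussianMatrix m n) := by
  refine ⟨by fun_prop, ?_⟩
  have map_curry := Measure.infinitePi_map_curry fun (_ : m) (_ : n) ↦ gaussianReal 0 1
  simp only [Measure.infinitePi_eq_pi] at map_curry
  exact map_curry

lemma measurePreserving_transpose_stdGaussianMatrix :
    MeasurePreserving transpose (stdGaussianMatrix m n) (stdGaussianMatrix n m) := by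
  have swap := measurePreserving_piCongrLeft (fun _ : n × m ↦ gaussianReal 0 1)
    (Equiv.prodComm m n)
  exact measurePreserving_curry_stdGaussianMatrix.comp
    (swap.comp (measurePreserving_curry_stdGaussianMatrix.symm _))

variable [DecidableEq m]

lemma measurePreserving_mulVec_pi_gaussianReal {Q : Matrix m m ℝ} (hQ : Q ∈ orthogonalGroup m ℝ) :
    MeasurePreserving (Q *ᵥ ·) (Measure.pi fun _ ↦ gaussianReal 0 1)
      (Measure.pi fun _ ↦ gaussianReal 0 1) := by
  have unitary_Q : toEuclideanCLM (n := m) (𝕜 := ℝ) Q ∈ unitary _ :=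
    Unitary.map_mem (toEuclideanCLM (n := m) (𝕜 := ℝ)) hQ
  have isometry : MeasurePreserving (toEuclideanCLM (n := m) (𝕜 := ℝ) Q)
      (stdGaussian (EuclideanSpace ℝ m)) (stdGaussian (EuclideanSpace ℝ m)) :=
    ⟨by fun_prop, stdGaussian_map (Unitary.linearIsometryEquiv ⟨_, unitary_Q⟩)⟩
  have ofLp : MeasurePreserving WithLp.ofLp (stdGaussian (EuclideanSpace ℝ m))
      (Measure.pi fun _ : m ↦ gaussianReal 0 1) :=
    MeasurePreserving.symm (MeasurableEquiv.toLp 2 (m → ℝ)) measurePreserving_toLp_stdGaussian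
  exact ofLp.comp (isometry.comp measurePreserving_toLp_stdGaussian)

lemma measurePreserving_mul_stdGaussianMatrix {Q : Matrix m m ℝ} (hQ : Q ∈ orthogonalGroup m ℝ) :
    MeasurePreserving (Q * ·) (stdGaussianMatrix m n) (stdGaussianMatrix m n) := by
  have columnwise : MeasurePreserving (fun (A : Matrix n m ℝ) j ↦ Q *ᵥ A j)
      (stdGaussianMatrix n m) (stdGaussianMatrix n m) :=
    measurePreserving_pi _ _ fun _ ↦ measurePreserving_mulVec_pi_gaussianReal hQ
  exact measurePreserving_transpose_stdGaussianMatrix.comp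
    (columnwise.comp measurePreserving_transpose_stdGaussianMatrix)

lemma exists_mem_orthogonalGroup_toEuclideanLin_apply_eq {v w : EuclideanSpace ℝ m}
    (h : ‖v‖ = ‖w‖) : ∃ Q ∈ orthogonalGroup m ℝ, toEuclideanLin Q v = w := by
  let R := Unitary.linearIsometryEquiv.symm (Submodule.span ℝ {v - w})ᗮ.reflection
  let E := toEuclideanCLM (n := m) (𝕜 := ℝ)
  refine ⟨E.symm R, Unitary.map_mem E.symm R.2, ?_⟩
  rw [← coe_toEuclideanCLM_eq_toEuclideanLin]
  change E (E.symm R) v = w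
  rw [E.apply_symm_apply]
  exact Submodule.reflection_sub h

end Invariance

section Moments

variable {m n : Type*} [Fintype m] [Fintype n] [DecidableEq m]

lemma lintegral_enorm_pinvRow_updateRow_single_rpow_le (G : Matrix m n ℝ) (i : m) {s : ℝ}
    (hs : 0 ≤ s) (hmn : Fintype.card m + s ≤ Fintype.card n) :
    ∫⁻ y, ‖toEuclideanLin (pinvRow (G.updateRow i y)) (EuclideanSpace.single i 1)‖ₑ ^ s
        ∂Measure.pi (fun _ ↦ gaussianReal 0 1) ≤
      ENNReal.ofReal (chiMoment (s + 1) (-s)) := by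
  let K := otherRowsPerp G i
  have finrank_K : s + 1 ≤ finrank ℝ K := by
    have := card_succ_le_card_add_finrank_otherRowsPerp G i
    have : (Fintype.card n + 1 : ℝ) ≤ Fintype.card m + finrank ℝ K := by exact_mod_cast this
    linarith
  have : Nontrivial K := finrank_pos_iff.1 (by exact_mod_cast (by linarith : (0 : ℝ) < finrank ℝ K))
  have row_i_bound (y : n → ℝ) :
      ‖toEuclideanLin (pinvRow (G.updateRow i y)) (EuclideanSpace.single i 1)‖ₑ ^ s ≤
        ‖K.orthogonalProjectionOnto (WithLp.toLp 2 y)‖ₑ ^ (-s) := by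
    rw [ENNReal.rpow_neg, ← ENNReal.inv_rpow]
    gcongr
    have bound := enorm_pinvRow_single_le (G.updateRow i y) i
    rwa [otherRowsPerp_updateRow, updateRow_self] at bound
  calc _ ≤ ∫⁻ y, ‖K.orthogonalProjectionOnto (WithLp.toLp 2 y)‖ₑ ^ (-s)
          ∂Measure.pi (fun _ ↦ gaussianReal 0 1) := lintegral_mono row_i_bound
    _ = ∫⁻ z, ‖K.orthogonalProjectionOnto z‖ₑ ^ (-s) ∂stdGaussian (EuclideanSpace ℝ n) :=
        measurePreserving_toLp_stdGaussian.lintegral_comp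
          (f := fun z ↦ ‖K.orthogonalProjectionOnto z‖ₑ ^ (-s)) (by fun_prop)
    _ = ENNReal.ofReal (chiMoment (finrank ℝ K) (-s)) :=
        lintegral_enorm_orthogonalProjection_rpow_stdGaussian K (by linarith)
    _ ≤ ENNReal.ofReal (chiMoment (s + 1) (-s)) :=
        ENNReal.ofReal_le_ofReal (chiMoment_neg_le_chiMoment_neg hs (by linarith) finrank_K)

lemma lintegral_enorm_pinvRow_single_rpow_le (i : m) {s : ℝ} (hs : 0 ≤ s)
    (hmn : Fintype.card m + s ≤ Fintype.card n) :
    ∫⁻ G, ‖toEuclideanLin (pinvRow G) (EuclideanSpace.single i 1)‖ₑ ^ s ∂stdGaussianMatrix m n ≤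
      ENNReal.ofReal (chiMoment (s + 1) (-s)) := by
  calc _ = ∫⁻ G, ∫⁻ y, ‖toEuclideanLin (pinvRow (G.updateRow i y)) (EuclideanSpace.single i 1)‖ₑ ^ s
          ∂Measure.pi (fun _ ↦ gaussianReal 0 1) ∂stdGaussianMatrix m n :=
        (lintegral_update (fun _ ↦ Measure.pi fun _ ↦ gaussianReal 0 1)
          (measurable_enorm_pinvRow_apply_rpow _ s) i).symm
    _ ≤ ∫⁻ _, ENNReal.ofReal (chiMoment (s + 1) (-s)) ∂stdGaussianMatrix m n :=
        lintegral_mono fun G ↦ lintegral_enorm_pinvRow_updateRow_single_rpow_le G i hs hmn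
    _ = _ := by rw [lintegral_const, measure_univ, mul_one]

lemma lintegral_enorm_pinvRow_apply_rpow_le [Nonempty m] (x : EuclideanSpace ℝ m) {s : ℝ}
    (hs : 0 ≤ s) (hmn : Fintype.card m + s ≤ Fintype.card n) :
    ∫⁻ G, ‖toEuclideanLin (pinvRow G) x‖ₑ ^ s ∂stdGaussianMatrix m n ≤
      ‖x‖ₑ ^ s * ENNReal.ofReal (chiMoment (s + 1) (-s)) := by
  obtain ⟨i⟩ := ‹Nonempty m›
  obtain ⟨Q, hQ, hQx⟩ := exists_mem_orthogonalGroup_toEuclideanLin_apply_eq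
    (v := x) (w := ‖x‖ • EuclideanSpace.single i (1 : ℝ)) (by simp [norm_smul])
  have rotate (G : Matrix m n ℝ) : toEuclideanLin (pinvRow G) x =
      ‖x‖ • toEuclideanLin (pinvRow (Q * G)) (EuclideanSpace.single i 1) := by
    have det_Q : IsUnit Q.det := isUnit_det_of_left_inverse ((mem_orthogonalGroup_iff' m ℝ).1 hQ)
    rw [← pinvRow_mul_mul_of_isUnit_det det_Q, toLpLin_mul_same, LinearMap.comp_apply, hQx,
      map_smul]
  have invariant := (measurePreserving_mul_stdGaussianMatrix (n := n) hQ).lintegral_comp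
    (measurable_enorm_pinvRow_apply_rpow (EuclideanSpace.single i 1) s)
  simp only [rotate, enorm_smul, enorm_norm, ENNReal.mul_rpow_of_nonneg _ _ hs]
  rw [lintegral_const_mul' _ _ (by finiteness), invariant]
  gcongr
  exact lintegral_enorm_pinvRow_single_rpow_le i hs hmn

lemma lintegral_enorm_specNorm_pinvRow_rpow_mul_le [Nonempty m] {s : ℝ} (hs : 0 ≤ s)
    (hmn : Fintype.card m + s ≤ Fintype.card n) :
    (∫⁻ G, ‖specNorm (pinvRow G)‖ₑ ^ s ∂stdGaussianMatrix m n) *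
        ENNReal.ofReal (chiMoment 1 s ^ 2) ≤
      ENNReal.ofReal (chiMoment (Fintype.card m) s) := by
  have hχ : 0 < chiMoment 1 s := chiMoment_pos one_pos (by linarith)
  set c := ENNReal.ofReal (chiMoment 1 s) with hc
  have hc0 : c ≠ 0 := by simpa [hc] using hχ
  have moment : (∫⁻ G, ‖specNorm (pinvRow G)‖ₑ ^ s ∂stdGaussianMatrix m n) * c ≤
      ENNReal.ofReal (chiMoment (Fintype.card m) s) * c⁻¹ := by
    calc _ = ∫⁻ G, ‖specNorm (pinvRow G)‖ₑ ^ s * c ∂stdGaussianMatrix m n :=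
          (lintegral_mul_const' _ _ ENNReal.ofReal_ne_top).symm
      _ ≤ ∫⁻ G, ∫⁻ x, ‖toEuclideanLin (pinvRow G) x‖ₑ ^ s ∂stdGaussian (EuclideanSpace ℝ m)
            ∂stdGaussianMatrix m n := by
          gcongr with G
          rw [specNorm, enorm_norm]
          exact enorm_rpow_mul_chiMoment_le _ hs
      _ = ∫⁻ x, ∫⁻ G, ‖toEuclideanLin (pinvRow G) x‖ₑ ^ s
            ∂stdGaussianMatrix m n ∂stdGaussian (EuclideanSpace ℝ m) :=
          lintegral_lintegral_swap <| Measurable.aemeasurable <|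
            (measurable_toEuclideanLin_pinvRow_apply (m := m) (n := n)).enorm.pow_const s
      _ ≤ ∫⁻ x : EuclideanSpace ℝ m, ‖x‖ₑ ^ s * c⁻¹ ∂stdGaussian (EuclideanSpace ℝ m) := by
          gcongr with x
          rw [hc, ← ENNReal.ofReal_inv_of_pos hχ, ← chiMoment_add_one_neg hs]
          exact lintegral_enorm_pinvRow_apply_rpow_le x hs hmn
      _ = _ := by
          rw [lintegral_mul_const _ (by fun_prop), lintegral_enorm_rpow_stdGaussian
            (by rw [finrank_euclideanSpace]; positivity), finrank_euclideanSpace]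
  rw [ENNReal.ofReal_pow hχ.le, pow_two, ← mul_assoc]
  rwa [← div_eq_mul_inv, ENNReal.le_div_iff_mul_le (.inl hc0) (.inl ENNReal.ofReal_ne_top)]
    at moment

lemma chiMoment_div_chiMoment_one_sq_le {d : ℝ} (hd : 0 < d) {p : ℕ} (hp : 1 ≤ p) :
    chiMoment d p / chiMoment 1 p ^ 2 ≤ (Real.exp 1 * √(d + p) / p) ^ (p : ℝ) := by
  calc chiMoment d p / chiMoment 1 p ^ 2 ≤ √(d + p) ^ (p : ℝ) / (p / Real.exp 1) ^ p := by
        gcongr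
        · exact chiMoment_le_sqrt_rpow hd p.cast_nonneg
        · exact div_exp_pow_le_chiMoment_one_sq p
    _ = (Real.exp 1 * √(d + p) / p) ^ (p : ℝ) := by
        rw [Real.rpow_natCast, Real.rpow_natCast, ← div_pow]
        congr 1
        field_simp

lemma eLpNorm_specNorm_pinvRow_le {p : ℕ} (hp : 1 ≤ p)
    (hmn : Fintype.card m + p ≤ Fintype.card n) :
    eLpNorm (fun G ↦ specNorm (pinvRow G)) p (stdGaussianMatrix m n) ≤
      ENNReal.ofReal (Real.exp 1 * √(Fintype.card m + p) / p) := by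
  cases isEmpty_or_nonempty m
  · have specNorm_eq_zero (G : Matrix m n ℝ) : specNorm (pinvRow G) = 0 :=
      ContinuousLinearMap.opNorm_subsingleton _
    simp [specNorm_eq_zero]
  have hp0 : (0 : ℝ) < p := by exact_mod_cast hp
  have hχ : 0 < chiMoment 1 p := chiMoment_pos one_pos (by positivity)
  have moment := lintegral_enorm_specNorm_pinvRow_rpow_mul_le (m := m) (n := n) p.cast_nonneg
    (by exact_mod_cast hmn)
  rw [eLpNorm_eq_lintegral_rpow_enorm_toReal (by positivity) (by finiteness),
    ENNReal.toReal_natCast, one_div, ENNReal.rpow_inv_le_iff hp0,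
    ENNReal.ofReal_rpow_of_nonneg (by positivity) hp0.le]
  calc _ ≤ ENNReal.ofReal (chiMoment (Fintype.card m) p) / ENNReal.ofReal (chiMoment 1 p ^ 2) :=
        ENNReal.le_div_iff_mul_le (.inl (by simpa using hχ.ne')) (.inl ENNReal.ofReal_ne_top) |>.2
          moment
    _ = ENNReal.ofReal (chiMoment (Fintype.card m) p / chiMoment 1 p ^ 2) :=
        (ENNReal.ofReal_div_of_pos (by positivity)).symm
    _ ≤ _ := ENNReal.ofReal_le_ofReal <|
        chiMoment_div_chiMoment_one_sq_le (by exact_mod_cast Fintype.card_pos) hp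

theorem expected_opNorm_pinv_gaussian_general {p : ℕ} (hp : 1 ≤ p)
    (hmn : Fintype.card m + p ≤ Fintype.card n) :
    Integrable (fun G ↦ specNorm (pinvRow G)) (stdGaussianMatrix m n) ∧
      ∫ G, specNorm (pinvRow G) ∂stdGaussianMatrix m n ≤
        Real.exp 1 * √(Fintype.card m + p) / p := by
  have measurable_norm :
      AEStronglyMeasurable (fun G ↦ specNorm (pinvRow G)) (stdGaussianMatrix m n) :=
    measurable_specNorm_pinvRow.aestronglyMeasurable
  have eLpNorm_one_le : eLpNorm (fun G ↦ specNorm (pinvRow G)) 1 (stdGaussianMatrix m n) ≤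
      ENNReal.ofReal (Real.exp 1 * √(Fintype.card m + p) / p) :=
    (eLpNorm_le_eLpNorm_of_exponent_le (by exact_mod_cast hp) measurable_norm).trans
      (eLpNorm_specNorm_pinvRow_le hp hmn)
  refine ⟨memLp_one_iff_integrable.1
    ⟨measurable_norm, eLpNorm_one_le.trans_lt ENNReal.ofReal_lt_top⟩, ?_⟩
  rw [← ENNReal.ofReal_le_ofReal_iff (by positivity)]
  calc _ ≤ ‖∫ G, specNorm (pinvRow G) ∂stdGaussianMatrix m n‖ₑ := Real.ofReal_le_enorm _
    _ ≤ ∫⁻ G, ‖specNorm (pinvRow G)‖ₑ ∂stdGaussianMatrix m n := enorm_integral_le_lintegral_enorm _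
    _ ≤ _ := by rwa [← eLpNorm_one_eq_lintegral_enorm]

end Moments

/-- `E‖G†‖ ≤ e√(r+p)/p` for an `r×(r+p)` standard Gaussian
matrix `G` with `p ≥ 2`. -/
theorem expected_opNorm_pinv_gaussian {r p : ℕ} (hp : 2 ≤ p) :
    ∫ G, specNorm (pinvRow G) ∂(stdGaussianMatrix (Fin r) (Fin (r + p))) ≤
      Real.exp 1 * Real.sqrt ((r : ℝ) + p) / p := by
  simpa using (expected_opNorm_pinv_gaussian_general (m := Fin r) (n := Fin (r + p))
    (by lia : 1 ≤ p) (by simp)).2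
end
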